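/- (Scholz reflection principle) For every squarefree integer d > 1, the 3-torsion subgroups of the class groups of ℚ(√−d) and ℚ(√3d) satisfy |Cl_{ℚ(√−d)}[3]| ≤ 3 · |Cl_{ℚ(√3d)}[3]| and |Cl_{ℚ(√3d)}[3]| ≤ 3 · |Cl_{ℚ(√−d)}[3]|; equivalently, log₃|Cl_{ℚ(√−d)}[3]| and log₃|Cl_{ℚ(√3d)}[3]| differ by at most 1. -/

import Mathlib

open NumberField IntermediateField

/-- The order of the `ℓ`-torsion subgroup of the class group of a number field `K`. -/
noncomputable def clTor (K : Type*) [Field K] (ℓ : ℕ) : ℕ :=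
  Nat.card {c : ClassGroup (𝓞 K) // c ^ ℓ = 1}

/-- The imaginary quadratic field `ℚ(√-d)`, realized inside `ℂ` as `ℚ(i·√d)`. -/
noncomputable def Qneg (d : ℕ) : IntermediateField ℚ ℂ :=
  ℚ⟮(Complex.I * (Real.sqrt d : ℂ) : ℂ)⟯

/-- The real quadratic field `ℚ(√(3d))`, realized inside `ℂ`. -/
noncomputable def Qpos3 (d : ℕ) : IntermediateField ℚ ℂ :=
  ℚ⟮((Real.sqrt (3 * d) : ℝ) : ℂ)⟯

/-!
Let `F` and `K` be quadratic fields whose compositum `L` has degree four and contains `ζ₃`. The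
inequality `|Cl_K[3]| ≤ 3 |Cl_F[3]|` is proved by contradiction, and applied in both directions.

Let `T` be a set of primes of `F`, prime to `6`, whose classes form a basis of `Cl_F / Cl_F³`, so
that `3 ^ |T| = |Cl_F[3]|`. Every class of `Cl_K[3]` contains an ideal `𝔞` prime to `3` and to
`T`, and `𝔞³ = (α)` is principal. If `|Cl_K[3]| > 3 |Cl_F[3]|`, then two different classes give
numbers `α`, `β` with the same cubic residue classes at the primes above `T` and the same value of
an invariant in `ZMod 3`, the obstruction to being a cube modulo `3√-3`. Hence `γ = α β²` generates
the cube of an ideal, is not a cube in `L`, is a cube modulo the primes above `T`, and is congruent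
to a cube modulo `3√-3`. As the norm of `γ` to `F` is a cube, the field `L(∛γ)` is abelian over `F`,
and its cubic subfield `M` is a cyclic extension of `F` which is unramified everywhere and in which
the primes of `T` split.

Such an `M` does not exist. All classes of `F` are products of cubes and of classes of split primes,
that is, of norms from `M`, so Chevalley's ambiguous class argument gives `|H⁻¹(U_M)| ≤ |H⁰(U_M)|`
for the cohomology of the units, whereas their Herbrand quotient is `|H⁻¹(U_M)| / |H⁰(U_M)| = 3`.
-/

open scoped nonZeroDivisors Pointwise

namespace Scholz

/-! ### Two-periodic complexes and Herbrand quotients -/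

section Index

variable {G H : Type*} [CommGroup G] [CommGroup H]

lemma relIndex_map_map_of_ker_inf_le {f : G →* H} {K L : Subgroup G} (hK : f.ker ⊓ L ≤ K)
    (hKL : K ≤ L) : (K.map f).relIndex (L.map f) = K.relIndex L := by
  have hinf : (K ⊔ f.ker) ⊓ L = K := by rw [sup_inf_assoc_of_le _ hKL, sup_eq_left.2 hK]
  have hsup : L ⊔ f.ker = (K ⊔ f.ker) ⊔ L := by
    rw [sup_right_comm, sup_eq_right.2 hKL]
  rw [Subgroup.relIndex_map_map, hsup, Subgroup.relIndex_sup_left, ← Subgroup.inf_relIndex_right,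
    hinf]

lemma relIndex_map_range (f : G →* H) (K : Subgroup G) :
    (K.map f).relIndex f.range = (K ⊔ f.ker).index := by
  rw [MonoidHom.range_eq_map, Subgroup.relIndex_map_map, top_sup_eq, Subgroup.relIndex_top_right]

lemma relIndex_map_self_eq {f : G →* G} (hf : Function.Injective f) {K L : Subgroup G}
    (hKL : K ≤ L) (hL : L.map f ≤ K) : (K.map f).relIndex K = (L.map f).relIndex L := by
  calc (K.map f).relIndex K
      = (K.map f).relIndex (L.map f) * (L.map f).relIndex K :=
        (Subgroup.relIndex_mul_relIndex _ _ _ (Subgroup.map_mono hKL) hL).symm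
    _ = (L.map f).relIndex K * K.relIndex L := by
        rw [Subgroup.relIndex_map_map_of_injective _ _ hf, mul_comm]
    _ = (L.map f).relIndex L := Subgroup.relIndex_mul_relIndex _ _ _ hL hKL

lemma map_range_pow (n : ℕ) (f : G →* H) :
    (powMonoidHom n : G →* G).range.map f = f.range.map (powMonoidHom n) := by
  rw [MonoidHom.range_eq_map, MonoidHom.range_eq_map, Subgroup.map_map, Subgroup.map_map]
  congr 1
  ext z
  exact map_pow f z n

lemma index_range_pow_eq_mul (n : ℕ) (f : G →* H) (hH : ∀ y : H, y ^ n = 1 → y = 1) :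
    (powMonoidHom n : G →* G).range.index =
      (f.ker.map (powMonoidHom n)).relIndex f.ker *
        (f.range.map (powMonoidHom n)).relIndex f.range := by
  have hker : (powMonoidHom n : G →* G).range ⊓ f.ker = f.ker.map (powMonoidHom n) := by
    ext y
    constructor
    · rintro ⟨⟨z, rfl⟩, hz⟩
      exact ⟨z, hH _ ((map_pow f z n).symm.trans hz), rfl⟩
    · rintro ⟨z, hz, rfl⟩
      exact ⟨⟨z, rfl⟩, pow_mem (show z ∈ f.ker from hz) n⟩
  rw [← hker, Subgroup.inf_relIndex_right, ← Subgroup.relIndex_sup_left, ← map_range_pow,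
    relIndex_map_range, Subgroup.relIndex_mul_index le_sup_left]

lemma index_range_pow_of_surjective {n : ℕ} {f : G →* H} (hf : Function.Surjective f)
    (hker : f.ker ≤ (powMonoidHom n).range) :
    (powMonoidHom n : G →* G).range.index = (powMonoidHom n : H →* H).range.index := by
  rw [← Subgroup.index_map_eq _ hf hker, map_range_pow, MonoidHom.range_eq_top.2 hf,
    ← MonoidHom.range_eq_map]

lemma relIndex_comap_self_eq_index {f : G →* G} {P : Subgroup G} (hP : P ≤ P.comap f)
    (hfin : P.index ≠ 0) : P.relIndex (P.comap f) = (f.range ⊔ P).index := by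
  have hcomap : (P.comap f).index = P.relIndex (f.range ⊔ P) := by
    rw [Subgroup.relIndex_sup_right, Subgroup.index_comap]
  have hleft := Subgroup.relIndex_mul_index hP
  have hright := Subgroup.relIndex_mul_index (le_sup_right : P ≤ f.range ⊔ P)
  have hne : P.relIndex (f.range ⊔ P) ≠ 0 := left_ne_zero_of_mul (hright ▸ hfin)
  apply Nat.eq_of_mul_eq_mul_left (Nat.pos_of_ne_zero hne)
  rw [hright, ← hleft, hcomap, mul_comm]

end Index

/-- A commutative group with endomorphisms `δ`, `ν` such that `δ ∘ ν` and `ν ∘ δ` are trivial. For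
a group acted on by a cyclic group with generator `σ`, the endomorphisms `σ - 1` and the norm form
such a complex, whose homology is Tate cohomology. -/
structure TwoPeriodic (G : Type*) [CommGroup G] where
  δ : G →* G
  ν : G →* G
  δ_ν : ∀ x, δ (ν x) = 1
  ν_δ : ∀ x, ν (δ x) = 1

namespace TwoPeriodic

variable {G H : Type*} [CommGroup G] [CommGroup H]

/-- The order of `Ĥ⁰ = ker δ / im ν`, or `0` if this group is infinite. -/
noncomputable def hZero (C : TwoPeriodic G) : ℕ := C.ν.range.relIndex C.δ.ker

/-- The order of `Ĥ⁻¹ = ker ν / im δ`, or `0` if this group is infinite. -/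
noncomputable def hNegOne (C : TwoPeriodic G) : ℕ := C.δ.range.relIndex C.ν.ker

lemma range_ν_le (C : TwoPeriodic G) : C.ν.range ≤ C.δ.ker := by
  rintro _ ⟨x, rfl⟩
  exact C.δ_ν x

lemma range_δ_le (C : TwoPeriodic G) : C.δ.range ≤ C.ν.ker := by
  rintro _ ⟨x, rfl⟩
  exact C.ν_δ x

/-- Homomorphisms commuting with the two endomorphisms. -/
structure IsHom (C : TwoPeriodic G) (D : TwoPeriodic H) (f : G →* H) : Prop where
  map_δ : ∀ x, f (C.δ x) = D.δ (f x)
  map_ν : ∀ x, f (C.ν x) = D.ν (f x)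

namespace IsHom

variable {C : TwoPeriodic G} {D : TwoPeriodic H} {f : G →* H}

lemma map_range_δ (hf : IsHom C D f) : C.δ.range.map f = f.range.map D.δ := by
  rw [MonoidHom.range_eq_map, MonoidHom.range_eq_map, Subgroup.map_map, Subgroup.map_map]
  congr 1
  ext x
  exact hf.map_δ x

lemma map_range_ν (hf : IsHom C D f) : C.ν.range.map f = f.range.map D.ν := by
  rw [MonoidHom.range_eq_map, MonoidHom.range_eq_map, Subgroup.map_map, Subgroup.map_map]
  congr 1
  ext x
  exact hf.map_ν x

lemma map_ker_δ_le (hf : IsHom C D f) : C.δ.ker.map f ≤ D.δ.ker := by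
  rintro _ ⟨a, ha, rfl⟩
  rw [MonoidHom.mem_ker, ← hf.map_δ, MonoidHom.mem_ker.1 ha, map_one]

end IsHom

end TwoPeriodic

section OrderThree

variable {G : Type*} [CommGroup G]

/-- The complex with `δ = σ - 1` and `ν = 1 + σ + σ²`, written multiplicatively, for `σ³ = 1`. -/
def cubicComplex (σ : G →* G) (hσ : ∀ x, σ (σ (σ x)) = x) : TwoPeriodic G where
  δ := σ / MonoidHom.id G
  ν := MonoidHom.id G * σ * σ.comp σ
  δ_ν x := by
    change σ (x * σ x * σ (σ x)) / (x * σ x * σ (σ x)) = 1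
    rw [map_mul, map_mul, hσ, div_eq_one]
    ac_rfl
  ν_δ x := by
    change σ x / x * σ (σ x / x) * σ (σ (σ x / x)) = 1
    rw [map_div, map_div, hσ, div_mul_div_comm, div_mul_div_comm, div_eq_one]
    ac_rfl

variable {σ : G →* G} {hσ : ∀ x, σ (σ (σ x)) = x}

lemma cubicComplex_δ_apply (x : G) : (cubicComplex σ hσ).δ x = σ x / x := rfl

lemma cubicComplex_ν_apply (x : G) : (cubicComplex σ hσ).ν x = x * σ x * σ (σ x) := rfl

lemma mem_ker_cubicComplex_δ {x : G} : x ∈ (cubicComplex σ hσ).δ.ker ↔ σ x = x := by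
  rw [MonoidHom.mem_ker, cubicComplex_δ_apply, div_eq_one]

lemma cubicComplex_isHom {H : Type*} [CommGroup H] {τ : H →* H} {hτ : ∀ x, τ (τ (τ x)) = x}
    {f : G →* H} (hf : ∀ x, f (σ x) = τ (f x)) :
    (cubicComplex σ hσ).IsHom (cubicComplex τ hτ) f where
  map_δ x := by simp only [cubicComplex_δ_apply, map_div, hf]
  map_ν x := by simp only [cubicComplex_ν_apply, map_mul, hf]

lemma cubicComplex_ν_of_mem_ker_δ {x : G} (hx : x ∈ (cubicComplex σ hσ).δ.ker) :
    (cubicComplex σ hσ).ν x = x ^ 3 := by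
  rw [mem_ker_cubicComplex_δ] at hx
  rw [cubicComplex_ν_apply, hx, hx, pow_succ, pow_two]

lemma map_ν_ker_δ : (cubicComplex σ hσ).δ.ker.map (cubicComplex σ hσ).ν =
    (cubicComplex σ hσ).δ.ker.map (powMonoidHom 3) := by
  ext y
  refine exists_congr fun x => and_congr_right fun hx => ?_
  rw [cubicComplex_ν_of_mem_ker_δ hx, powMonoidHom_apply]

-- On the kernel of `1 + σ + σ²` one has `(σ - 1)² = -3σ`.
lemma cubicComplex_δ_δ_of_mem_ker_ν {x : G} (hx : x ∈ (cubicComplex σ hσ).ν.ker) :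
    (cubicComplex σ hσ).δ ((cubicComplex σ hσ).δ x) = (σ x ^ 3)⁻¹ := by
  have hσσ : σ (σ x) = (x * σ x)⁻¹ := eq_inv_of_mul_eq_one_right hx
  calc σ (σ x / x) / (σ x / x) = (x * σ x)⁻¹ / σ x / (σ x / x) := by rw [map_div, hσσ]
    _ = (σ x ^ 3)⁻¹ := by
      rw [div_div, inv_div_left, inv_inj, mul_assoc, ← mul_assoc (σ x / x), div_mul_cancel,
        pow_three]

lemma map_mem_ker_ν {x : G} (hx : x ∈ (cubicComplex σ hσ).ν.ker) :
    σ x ∈ (cubicComplex σ hσ).ν.ker := by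
  rw [MonoidHom.mem_ker, cubicComplex_ν_apply] at hx ⊢
  rw [hσ, ← hx]
  ac_rfl

lemma map_δ_map_δ_ker_ν :
    ((cubicComplex σ hσ).ν.ker.map (cubicComplex σ hσ).δ).map (cubicComplex σ hσ).δ =
      (cubicComplex σ hσ).ν.ker.map (powMonoidHom 3) := by
  ext y
  constructor
  · rintro ⟨_, ⟨a, ha, rfl⟩, rfl⟩
    refine ⟨(σ a)⁻¹, inv_mem (map_mem_ker_ν ha), ?_⟩
    rw [cubicComplex_δ_δ_of_mem_ker_ν ha, powMonoidHom_apply, inv_pow]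
  · rintro ⟨a, ha, rfl⟩
    have hb : (σ (σ a))⁻¹ ∈ (cubicComplex σ hσ).ν.ker :=
      inv_mem (map_mem_ker_ν (map_mem_ker_ν ha))
    refine ⟨_, ⟨_, hb, rfl⟩, ?_⟩
    rw [cubicComplex_δ_δ_of_mem_ker_ν hb, map_inv, hσ, inv_pow, inv_inv, powMonoidHom_apply]

lemma relIndex_map_δ_ker_ν_sq (hG : ∀ x : G, x ^ 3 = 1 → x = 1) :
    ((cubicComplex σ hσ).ν.ker.map (cubicComplex σ hσ).δ).relIndex (cubicComplex σ hσ).ν.ker ^ 2 =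
      ((cubicComplex σ hσ).ν.ker.map (powMonoidHom 3)).relIndex (cubicComplex σ hσ).ν.ker := by
  set C := cubicComplex σ hσ
  have hδ : C.ν.ker.map C.δ ≤ C.ν.ker := (Subgroup.map_le_range _ _).trans C.range_δ_le
  have hdisj : C.δ.ker ⊓ C.ν.ker ≤ C.ν.ker.map C.δ := fun x hx => by
    rw [hG x ((cubicComplex_ν_of_mem_ker_δ hx.1).symm.trans hx.2)]
    exact one_mem _
  rw [← map_δ_map_δ_ker_ν, sq, ← Subgroup.relIndex_mul_relIndex _ _ _ (Subgroup.map_mono hδ) hδ,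
    relIndex_map_map_of_ker_inf_le hdisj hδ]

theorem hNegOne_sq_mul_eq (hG : ∀ x : G, x ^ 3 = 1 → x = 1) :
    (cubicComplex σ hσ).hNegOne ^ 2 *
        ((cubicComplex σ hσ).δ.ker.map (powMonoidHom 3)).relIndex (cubicComplex σ hσ).δ.ker ^ 3 =
      (cubicComplex σ hσ).hZero ^ 2 * (powMonoidHom 3 : G →* G).range.index := by
  set C := cubicComplex σ hσ
  have hcube : Function.Injective (powMonoidHom 3 : G →* G) := (injective_iff_map_eq_one _).2 hG
  have hνδ : C.δ.ker.map (powMonoidHom 3) ≤ C.ν.range :=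
    map_ν_ker_δ.symm.trans_le (Subgroup.map_le_range _ _)
  set k := (C.δ.ker.map (powMonoidHom 3)).relIndex C.ν.range
  have hfixed : k * C.hZero = (C.δ.ker.map (powMonoidHom 3)).relIndex C.δ.ker :=
    Subgroup.relIndex_mul_relIndex _ _ _ hνδ C.range_ν_le
  have hk : (C.ν.ker.map C.δ).relIndex C.δ.range = k := by
    rw [relIndex_map_range, sup_comm, ← relIndex_map_range, map_ν_ker_δ]
  have hker : (C.ν.ker.map C.δ).relIndex C.ν.ker = k * C.hNegOne := by
    rw [← Subgroup.relIndex_mul_relIndex _ _ _ (Subgroup.map_le_range _ _) C.range_δ_le, hk,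
      TwoPeriodic.hNegOne]
  rw [index_range_pow_eq_mul 3 C.ν hG, ← relIndex_map_δ_ker_ν_sq hG, hker,
    relIndex_map_self_eq hcube C.range_ν_le hνδ, ← hfixed]
  ring

theorem hNegOne_eq_three_mul_hZero (hG : ∀ x : G, x ^ 3 = 1 → x = 1) {r : ℕ}
    (hindex : (powMonoidHom 3 : G →* G).range.index = 3 ^ (3 * r + 2))
    (hfixed : ((cubicComplex σ hσ).δ.ker.map (powMonoidHom 3)).relIndex (cubicComplex σ hσ).δ.ker =
      3 ^ r) :
    (cubicComplex σ hσ).hNegOne = 3 * (cubicComplex σ hσ).hZero := by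
  have h := hNegOne_sq_mul_eq (σ := σ) (hσ := hσ) hG
  rw [hindex, hfixed, pow_add, ← pow_mul', ← mul_assoc, mul_right_comm] at h
  have hsq := Nat.eq_of_mul_eq_mul_right (by positivity) h
  exact Nat.pow_left_injective two_ne_zero (by linarith)

lemma hZero_ne_zero
    (hfixed : ((cubicComplex σ hσ).δ.ker.map (powMonoidHom 3)).relIndex (cubicComplex σ hσ).δ.ker ≠
      0) : (cubicComplex σ hσ).hZero ≠ 0 :=
  fun h => hfixed (Subgroup.relIndex_eq_zero_of_le_left
    (map_ν_ker_δ.symm.trans_le (Subgroup.map_le_range _ _)) h)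

end OrderThree

section Chevalley

variable {U A I : Type*} [CommGroup U] [CommGroup A] [CommGroup I]
  {CU : TwoPeriodic U} {CA : TwoPeriodic A} {CI : TwoPeriodic I} {e : U →* A} {dv : A →* I}

-- Both sides are the order of `H¹` of the units: the connecting map is `dv b ↦ δ b`.
lemma relIndex_fixed_principal (he : CU.IsHom CA e) (hdv : CA.IsHom CI dv)
    (hinj : Function.Injective e) (hexact : dv.ker = e.range) (hA : CA.ν.ker ≤ CA.δ.range) :
    (CA.δ.ker.map dv).relIndex (CI.δ.ker ⊓ dv.range) = CU.hNegOne := by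
  have hdve (u : U) : dv (e u) = 1 := hexact.ge ⟨u, rfl⟩
  have hle : CA.δ.ker ⊔ e.range ≤ CI.δ.ker.comap dv :=
    sup_le (Subgroup.map_le_iff_le_comap.1 hdv.map_ker_δ_le) (by
      rintro _ ⟨u, rfl⟩
      rw [Subgroup.mem_comap, hdve]
      exact one_mem _)
  have hmap_dv : (CA.δ.ker ⊔ e.range).map dv = CA.δ.ker.map dv := by
    rw [Subgroup.map_sup, ← hexact, (Subgroup.map_eq_bot_iff dv.ker).2 le_rfl, sup_bot_eq]
  have hmap_δ : (CA.δ.ker ⊔ e.range).map CA.δ = CU.δ.range.map e := by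
    rw [Subgroup.map_sup, (Subgroup.map_eq_bot_iff _).2 le_rfl, bot_sup_eq, he.map_range_δ]
  have hmap_comap : (CI.δ.ker.comap dv).map CA.δ = CU.ν.ker.map e := by
    ext y
    constructor
    · rintro ⟨b, hb, rfl⟩
      obtain ⟨u, hu⟩ := hexact.le ((hdv.map_δ b).trans hb : CA.δ b ∈ dv.ker)
      exact ⟨u, hinj (by rw [he.map_ν, hu, CA.ν_δ, map_one]), hu⟩
    · rintro ⟨u, hu, rfl⟩
      obtain ⟨b, hb⟩ := hA (by rw [MonoidHom.mem_ker, ← he.map_ν, MonoidHom.mem_ker.1 hu, map_one] :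
        e u ∈ CA.ν.ker)
      exact ⟨b, by rw [SetLike.mem_coe, Subgroup.mem_comap, MonoidHom.mem_ker, ← hdv.map_δ, hb,
        hdve], hb⟩
  calc (CA.δ.ker.map dv).relIndex (CI.δ.ker ⊓ dv.range)
      = ((CA.δ.ker ⊔ e.range).map dv).relIndex ((CI.δ.ker.comap dv).map dv) := by
        rw [hmap_dv, Subgroup.map_comap_eq, inf_comm]
    _ = (CA.δ.ker ⊔ e.range).relIndex (CI.δ.ker.comap dv) :=
        relIndex_map_map_of_ker_inf_le (inf_le_left.trans (hexact.le.trans le_sup_right)) hle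
    _ = ((CA.δ.ker ⊔ e.range).map CA.δ).relIndex ((CI.δ.ker.comap dv).map CA.δ) :=
        (relIndex_map_map_of_ker_inf_le (inf_le_left.trans le_sup_left) hle).symm
    _ = CU.hNegOne := by
        rw [hmap_δ, hmap_comap, Subgroup.relIndex_map_map_of_injective _ _ hinj,
          TwoPeriodic.hNegOne]

-- If `δ x = dv a`, then `ν a` is a unit, whose class in `Ĥ⁰` determines that of `x`.
lemma relIndex_ambiguous_le_hZero (he : CU.IsHom CA e) (hdv : CA.IsHom CI dv)
    (hinj : Function.Injective e) (hexact : dv.ker = e.range) (hA : CA.ν.ker ≤ CA.δ.range)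
    (hU : CU.hZero ≠ 0) :
    (CI.δ.ker ⊔ dv.range).relIndex (dv.range.comap CI.δ) ≤ CU.hZero := by
  have hdve (u : U) : dv (e u) = 1 := hexact.ge ⟨u, rfl⟩
  have hle : CA.δ.range ⊔ e.range ≤ CI.δ.range.comap dv := by
    refine sup_le ?_ ?_
    · rintro _ ⟨a, rfl⟩
      exact ⟨dv a, (hdv.map_δ a).symm⟩
    · rintro _ ⟨u, rfl⟩
      exact ⟨1, by rw [hdve, map_one]⟩
  have hle' : CI.δ.ker ⊔ dv.range ≤ dv.range.comap CI.δ :=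
    sup_le (MonoidHom.ker_le_comap _ _) (by
      rintro _ ⟨a, rfl⟩
      exact ⟨CA.δ a, hdv.map_δ a⟩)
  have hmap_δ : (CI.δ.ker ⊔ dv.range).map CI.δ = (CA.δ.range ⊔ e.range).map dv := by
    rw [Subgroup.map_sup, (Subgroup.map_eq_bot_iff _).2 le_rfl, bot_sup_eq, Subgroup.map_sup,
      ← hexact, (Subgroup.map_eq_bot_iff dv.ker).2 le_rfl, sup_bot_eq, hdv.map_range_δ]
  have hmap_ν : (CA.δ.range ⊔ e.range).map CA.ν = CU.ν.range.map e := by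
    rw [Subgroup.map_sup, (Subgroup.map_eq_bot_iff _).2 CA.range_δ_le, bot_sup_eq, he.map_range_ν]
  have hmap_comap : (CI.δ.range.comap dv).map CA.ν ≤ CU.δ.ker.map e := by
    rintro _ ⟨a, ⟨x, hx⟩, rfl⟩
    obtain ⟨u, hu⟩ := hexact.le (by rw [MonoidHom.mem_ker, hdv.map_ν, ← hx, CI.ν_δ] :
      CA.ν a ∈ dv.ker)
    exact ⟨u, hinj (by rw [he.map_δ, hu, CA.δ_ν, map_one]), hu⟩
  calc (CI.δ.ker ⊔ dv.range).relIndex (dv.range.comap CI.δ)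
      = ((CI.δ.ker ⊔ dv.range).map CI.δ).relIndex ((dv.range.comap CI.δ).map CI.δ) :=
        (relIndex_map_map_of_ker_inf_le (inf_le_left.trans le_sup_left) hle').symm
    _ = ((CA.δ.range ⊔ e.range).map dv).relIndex ((CI.δ.range.comap dv).map dv) := by
        rw [hmap_δ, Subgroup.map_comap_eq, Subgroup.map_comap_eq, inf_comm]
    _ = (CA.δ.range ⊔ e.range).relIndex (CI.δ.range.comap dv) :=
        relIndex_map_map_of_ker_inf_le (inf_le_left.trans (hexact.le.trans le_sup_right)) hle
    _ = (CU.ν.range.map e).relIndex ((CI.δ.range.comap dv).map CA.ν) := by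
        rw [← hmap_ν, relIndex_map_map_of_ker_inf_le
          (inf_le_left.trans (hA.trans le_sup_left)) hle]
    _ ≤ (CU.ν.range.map e).relIndex (CU.δ.ker.map e) :=
        Subgroup.relIndex_le_of_le_right hmap_comap
          (by rwa [Subgroup.relIndex_map_map_of_injective _ _ hinj])
    _ = CU.hZero := Subgroup.relIndex_map_map_of_injective _ _ hinj

lemma relIndex_fixed_le_index (hdv : CA.IsHom CI dv) (hfin : dv.range.index ≠ 0)
    (hnorm : CI.δ.ker ≤ CA.δ.ker.map dv ⊔ CI.ν.range) :
    (CA.δ.ker.map dv).relIndex CI.δ.ker ≤ (CI.δ.range ⊔ dv.range).index := by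
  have hsup : CA.δ.ker.map dv ⊔ CI.ν.range = CI.δ.ker :=
    le_antisymm (sup_le hdv.map_ker_δ_le CI.range_ν_le) hnorm
  have hindex : ((CA.δ.ker.map dv).comap CI.ν).index = (CA.δ.ker.map dv).relIndex CI.δ.ker := by
    rw [Subgroup.index_comap, ← hsup, Subgroup.relIndex_sup_left]
  have hle : CI.δ.range ⊔ dv.range ≤ (CA.δ.ker.map dv).comap CI.ν := by
    refine sup_le (CI.range_δ_le.trans (MonoidHom.ker_le_comap _ _)) ?_
    rintro _ ⟨a, rfl⟩
    exact ⟨_, CA.δ_ν a, hdv.map_ν a⟩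
  have hne : (CI.δ.range ⊔ dv.range).index ≠ 0 :=
    ne_zero_of_dvd_ne_zero hfin (Subgroup.index_dvd_of_le le_sup_right)
  rw [← hindex]
  exact Nat.le_of_dvd (Nat.pos_of_ne_zero hne) (Subgroup.index_dvd_of_le hle)

-- As in Chevalley's ambiguous class number formula, the key is that the finite class group
-- `I / dv A` has as many classes killed by `δ` as classes modulo the image of `δ`.
theorem hNegOne_le_hZero (he : CU.IsHom CA e) (hdv : CA.IsHom CI dv)
    (hinj : Function.Injective e) (hexact : dv.ker = e.range) (hA : CA.ν.ker ≤ CA.δ.range)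
    (hfin : dv.range.index ≠ 0) (hnorm : CI.δ.ker ≤ CA.δ.ker.map dv ⊔ CI.ν.range)
    (hU : CU.hZero ≠ 0) : CU.hNegOne ≤ CU.hZero := by
  have hrange : dv.range ≤ dv.range.comap CI.δ := by
    rintro _ ⟨a, rfl⟩
    exact ⟨CA.δ a, hdv.map_δ a⟩
  have hfixed : dv.range.relIndex CI.δ.ker ≠ 0 :=
    mt Subgroup.index_eq_zero_of_relIndex_eq_zero hfin
  refine Nat.le_of_mul_le_mul_right ?_ (Nat.pos_of_ne_zero hfixed)
  calc CU.hNegOne * dv.range.relIndex CI.δ.ker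
      = (CA.δ.ker.map dv).relIndex CI.δ.ker := by
        rw [← relIndex_fixed_principal he hdv hinj hexact hA, inf_comm,
          Subgroup.relIndex_inf_mul_relIndex, inf_eq_left.2 (Subgroup.map_le_range _ _)]
    _ ≤ (CI.δ.range ⊔ dv.range).index := relIndex_fixed_le_index hdv hfin hnorm
    _ = dv.range.relIndex (dv.range.comap CI.δ) := (relIndex_comap_self_eq_index hrange hfin).symm
    _ = (CI.δ.ker ⊔ dv.range).relIndex (dv.range.comap CI.δ) * dv.range.relIndex CI.δ.ker := by
        rw [← Subgroup.relIndex_mul_relIndex _ _ _ (le_sup_right : _ ≤ CI.δ.ker ⊔ dv.range)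
          (sup_le (MonoidHom.ker_le_comap _ _) hrange), Subgroup.relIndex_sup_right, mul_comm]
    _ ≤ CU.hZero * dv.range.relIndex CI.δ.ker :=
        Nat.mul_le_mul_right _ (relIndex_ambiguous_le_hZero he hdv hinj hexact hA hU)

end Chevalley

/-! ### Units -/

section Units

lemma index_range_pow_of_free (Q : Type*) [CommGroup Q] [Module.Free ℤ (Additive Q)]
    [Module.Finite ℤ (Additive Q)] (n : ℕ) [NeZero n] :
    (powMonoidHom n : Q →* Q).range.index = n ^ Module.finrank ℤ (Additive Q) := by
  have hrange : Subgroup.toAddSubgroup (powMonoidHom n : Q →* Q).range =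
      (LinearMap.range (LinearMap.lsmul ℤ (Additive Q) n)).toAddSubgroup := by
    ext x
    simp only [Submodule.mem_toAddSubgroup, LinearMap.mem_range, LinearMap.lsmul_apply,
      natCast_zsmul]
    rfl
  rw [← ModN.natCard_eq, ← Subgroup.index_toAddSubgroup, hrange]
  rfl

variable {K : Type*} [Field K] {n : ℕ}

lemma units_eq_one_of_pow_eq_one (hK : ∀ x : K, x ^ n = 1 → x = 1) (u : (𝓞 K)ˣ) (hu : u ^ n = 1) :
    u = 1 := by
  have hcoe : ((u : 𝓞 K) : K) = 1 := hK _ (by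
    rw [← map_pow, ← Units.val_pow_eq_pow_val, hu, Units.val_one, map_one])
  exact Units.ext (FaithfulSMul.algebraMap_injective (𝓞 K) K (hcoe.trans (map_one _).symm))

theorem index_range_pow_units [NumberField K] [NeZero n] (hK : ∀ x : K, x ^ n = 1 → x = 1) :
    (powMonoidHom n : (𝓞 K)ˣ →* (𝓞 K)ˣ).range.index = n ^ Units.rank K := by
  have htorsion : Units.torsion K ≤ (powMonoidHom n).range := fun x hx => by
    have hinj : Function.Injective (powMonoidHom n : Units.torsion K →* Units.torsion K) :=
      (injective_iff_map_eq_one _).2 fun a ha =>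
        Subtype.ext (units_eq_one_of_pow_eq_one hK _ (congrArg Subtype.val ha))
    obtain ⟨y, hy⟩ := Finite.surjective_of_injective hinj ⟨x, hx⟩
    exact ⟨y, congrArg Subtype.val hy⟩
  rw [index_range_pow_of_surjective (H := (𝓞 K)ˣ ⧸ Units.torsion K)
    (QuotientGroup.mk'_surjective _) (by rwa [QuotientGroup.ker_mk']), index_range_pow_of_free,
    Units.finrank_modTorsion]

theorem units_rank_of_finrank_eq_three (F M : Type*) [Field F] [Field M] [NumberField F]
    [NumberField M] [Algebra F M] [IsGalois F M] (hFM : Module.finrank F M = 3) :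
    Units.rank M = 3 * Units.rank F + 2 := by
  have : IsUnramifiedAtInfinitePlaces F M :=
    IsUnramifiedAtInfinitePlaces_of_odd_finrank (by rw [hFM]; decide)
  have hcard := IsUnramifiedAtInfinitePlaces.card_infinitePlace F M
  have hpos : 0 < Fintype.card (InfinitePlace F) := Fintype.card_pos
  rw [hFM] at hcard
  unfold Units.rank
  lia

end Units

/-! ### Ideals in unramified Galois extensions -/

section Ideals

variable {F M : Type*} [Field F] [Field M] [Algebra F M]

lemma smul_map_algebraMap (g : Gal(M/F)) (I : Ideal (𝓞 F)) :
    g • I.map (algebraMap (𝓞 F) (𝓞 M)) = I.map (algebraMap (𝓞 F) (𝓞 M)) := by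
  rw [Ideal.pointwise_smul_def, Ideal.map_map]
  congr 1
  ext x
  exact g.commutes _

variable [NumberField M]

variable (F M) in
/-- No finite prime of `M` is ramified over `F`. -/
def UnramifiedAtFinitePrimes : Prop :=
  ∀ P : Ideal (𝓞 M), P ≠ ⊥ → P.IsPrime → P.ramificationIdx (𝓞 F) = 1

lemma UnramifiedAtFinitePrimes.map_eq_prod (hFM : UnramifiedAtFinitePrimes F M) {p : Ideal (𝓞 F)}
    [p.IsMaximal] (hp : p ≠ ⊥) :
    p.map (algebraMap (𝓞 F) (𝓞 M)) = ∏ P ∈ p.primesOver (𝓞 M), P := by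
  rw [Ideal.map_algebraMap_eq_finsetProd_pow hp]
  refine Finset.prod_congr rfl fun P hP => ?_
  obtain ⟨hPprime, hPp⟩ := Set.mem_toFinset.1 hP
  rw [hFM P (Ideal.ne_bot_of_liesOver_of_ne_bot hp P) hPprime, pow_one]

lemma isRelPrime_of_mem_primesOver {p : Ideal (𝓞 F)} (hp : p ≠ ⊥) {P Q : Ideal (𝓞 M)}
    (hP : P ∈ p.primesOver (𝓞 M)) (hQ : Q ∈ p.primesOver (𝓞 M)) (hPQ : P ≠ Q) : IsRelPrime P Q := by
  obtain ⟨hPprime, hPp⟩ := hP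
  obtain ⟨hQprime, hQp⟩ := hQ
  have := hPprime.isMaximal (Ideal.ne_bot_of_liesOver_of_ne_bot hp P)
  have := hQprime.isMaximal (Ideal.ne_bot_of_liesOver_of_ne_bot hp Q)
  exact (Ideal.isCoprime_of_isMaximal hPQ).isRelPrime

variable [NumberField F] [IsGalois F M]

lemma UnramifiedAtFinitePrimes.map_under_dvd (hFM : UnramifiedAtFinitePrimes F M)
    {P J : Ideal (𝓞 M)} [P.IsPrime] (hP : P ≠ ⊥) (hPJ : J ≤ P) (hJ : ∀ g : Gal(M/F), g • J = J) :
    (P.under (𝓞 F)).map (algebraMap (𝓞 F) (𝓞 M)) ∣ J := by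
  have hp : P.under (𝓞 F) ≠ ⊥ := Ideal.under_ne_bot (𝓞 F) hP
  have : (P.under (𝓞 F)).IsMaximal := Ideal.IsPrime.isMaximal inferInstance hp
  rw [hFM.map_eq_prod hp]
  refine Finset.prod_dvd_of_isRelPrime (fun Q hQ Q' hQ' hne => ?_) fun Q hQ => ?_
  · rw [Finset.mem_coe, Set.mem_toFinset] at hQ hQ'
    exact isRelPrime_of_mem_primesOver hp hQ hQ' hne
  · obtain ⟨hQprime, hQp⟩ := Set.mem_toFinset.1 hQ
    obtain ⟨g, rfl⟩ := Ideal.exists_smul_eq_of_isGaloisGroup (P.under (𝓞 F)) P Q Gal(M/F)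
    rw [Ideal.dvd_iff_le, ← hJ g]
    exact Ideal.pointwise_smul_le_pointwise_smul_iff.2 hPJ

lemma UnramifiedAtFinitePrimes.exists_map_eq_of_smul_eq (hFM : UnramifiedAtFinitePrimes F M)
    {J : Ideal (𝓞 M)} (hJ : J ≠ ⊥) (hinv : ∀ g : Gal(M/F), g • J = J) :
    ∃ I : Ideal (𝓞 F), I.map (algebraMap (𝓞 F) (𝓞 M)) = J := by
  induction J using (wellFounded_dvdNotUnit (α := Ideal (𝓞 M))).induction with
  | _ J ih =>
  by_cases hJ1 : J = ⊤
  · exact ⟨⊤, by rw [hJ1, Ideal.map_top]⟩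
  obtain ⟨P, hPmax, hPJ⟩ := Ideal.exists_le_maximal J hJ1
  have hPbot : P ≠ ⊥ := ne_bot_of_le_ne_bot hJ hPJ
  set pM := (P.under (𝓞 F)).map (algebraMap (𝓞 F) (𝓞 M)) with hpM
  obtain ⟨J', rfl⟩ : pM ∣ J := hFM.map_under_dvd hPbot hPJ hinv
  obtain ⟨hpMbot, hJ'⟩ := mul_ne_zero_iff.1 hJ
  have hpM_nonunit : ¬IsUnit pM := fun h =>
    hPmax.ne_top (top_le_iff.1
      ((Ideal.isUnit_iff.1 h).ge.trans (Ideal.map_le_iff_le_comap.2 le_rfl)))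
  have hinv' (g : Gal(M/F)) : g • J' = J' := mul_left_cancel₀ hpMbot (by
    rw [← hinv g, smul_mul', hpM, smul_map_algebraMap])
  obtain ⟨I, rfl⟩ := ih J' ⟨hJ', pM, hpM_nonunit, mul_comm _ _⟩ hJ' hinv'
  exact ⟨P.under (𝓞 F) * I, Ideal.map_mul _ _ _⟩

lemma UnramifiedAtFinitePrimes.map_eq_prod_smul (hFM : UnramifiedAtFinitePrimes F M)
    {p : Ideal (𝓞 F)} [p.IsMaximal] (hp : p ≠ ⊥)
    (hsplit : (p.primesOver (𝓞 M)).ncard = Module.finrank F M) {P : Ideal (𝓞 M)}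
    (hP : P ∈ p.primesOver (𝓞 M)) :
    p.map (algebraMap (𝓞 F) (𝓞 M)) = ∏ g : Gal(M/F), g • P := by
  classical
  obtain ⟨hPprime, hPp⟩ := hP
  have himage : Finset.univ.image (fun g : Gal(M/F) => g • P) = (p.primesOver (𝓞 M)).toFinset := by
    ext Q
    rw [Finset.mem_image, Set.mem_toFinset]
    constructor
    · rintro ⟨g, -, rfl⟩
      exact ⟨inferInstance, inferInstance⟩
    · rintro ⟨hQprime, hQp⟩
      obtain ⟨g, hg⟩ := Ideal.exists_smul_eq_of_isGaloisGroup p P Q Gal(M/F)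
      exact ⟨g, Finset.mem_univ _, hg⟩
  have hinj : Set.InjOn (fun g : Gal(M/F) => g • P) (Finset.univ : Finset Gal(M/F)) := by
    rw [← Finset.card_image_iff, himage, ← Set.ncard_eq_toFinset_card', hsplit, Finset.card_univ,
      ← Nat.card_eq_fintype_card, IsGalois.card_aut_eq_finrank]
  rw [hFM.map_eq_prod hp, ← himage, Finset.prod_image hinj]

end Ideals

/-! ### Fractional ideals in Galois extensions -/

section FractionalIdeals

variable {F M : Type*} [Field F] [Field M] [Algebra F M]

lemma nonZeroDivisors_le_comap_toRingHom (g : Gal(M/F)) :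
    (𝓞 M)⁰ ≤ (𝓞 M)⁰.comap (MulSemiringAction.toRingHom Gal(M/F) (𝓞 M) g) :=
  nonZeroDivisors_le_comap_nonZeroDivisors_of_injective _ (MulAction.injective g)

variable [NumberField M]

/-- The ring homomorphism by which a Galois automorphism acts on fractional ideals. -/
noncomputable def galoisHom (g : Gal(M/F)) :
    FractionalIdeal (𝓞 M)⁰ M →+* FractionalIdeal (𝓞 M)⁰ M :=
  FractionalIdeal.extendedHom' M (nonZeroDivisors_le_comap_toRingHom g)

lemma galoisHom_coeIdeal (g : Gal(M/F)) (J : Ideal (𝓞 M)) :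
    galoisHom g (J : FractionalIdeal (𝓞 M)⁰ M) =
      ((g • J : Ideal (𝓞 M)) : FractionalIdeal (𝓞 M)⁰ M) :=
  FractionalIdeal.extended_coeIdeal_eq_map M (nonZeroDivisors_le_comap_toRingHom g) J

lemma galoisHom_spanSingleton (g : Gal(M/F)) (x : M) :
    galoisHom g (FractionalIdeal.spanSingleton (𝓞 M)⁰ x) =
      FractionalIdeal.spanSingleton (𝓞 M)⁰ (g x) := by
  have hmap : IsLocalization.map M (MulSemiringAction.toRingHom Gal(M/F) (𝓞 M) g)
      (nonZeroDivisors_le_comap_toRingHom g) = (g : M →+* M) := by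
    refine IsLocalization.ringHom_ext (𝓞 M)⁰ ?_
    rw [IsLocalization.map_comp]
    rfl
  refine (FractionalIdeal.extended_spanSingleton M _ x).trans ?_
  rw [hmap]
  rfl

/-- The Galois action on fractional ideals. -/
noncomputable instance galoisAction :
    MulDistribMulAction Gal(M/F) (FractionalIdeal (𝓞 M)⁰ M) where
  smul g x := galoisHom g x
  one_smul x := by
    obtain ⟨a, J, -, rfl⟩ := FractionalIdeal.exists_eq_spanSingleton_mul x
    change galoisHom 1 _ = _
    rw [map_mul, galoisHom_coeIdeal, galoisHom_spanSingleton, one_smul, AlgEquiv.one_apply]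
  mul_smul g h x := by
    obtain ⟨a, J, -, rfl⟩ := FractionalIdeal.exists_eq_spanSingleton_mul x
    change galoisHom (g * h) _ = galoisHom g (galoisHom h _)
    simp only [map_mul, galoisHom_coeIdeal, galoisHom_spanSingleton, mul_smul, AlgEquiv.mul_apply]
  smul_mul g := map_mul (galoisHom g)
  smul_one g := map_one (galoisHom g)

lemma smul_coeIdeal (g : Gal(M/F)) (J : Ideal (𝓞 M)) :
    g • (J : FractionalIdeal (𝓞 M)⁰ M) = ((g • J : Ideal (𝓞 M)) : FractionalIdeal (𝓞 M)⁰ M) :=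
  galoisHom_coeIdeal g J

lemma smul_spanSingleton (g : Gal(M/F)) (x : M) :
    g • FractionalIdeal.spanSingleton (𝓞 M)⁰ x = FractionalIdeal.spanSingleton (𝓞 M)⁰ (g x) :=
  galoisHom_spanSingleton g x

variable [NumberField F]

variable (F M) in
/-- Extension of fractional ideals from `F` to `M`. -/
noncomputable abbrev extension : FractionalIdeal (𝓞 F)⁰ F →+* FractionalIdeal (𝓞 M)⁰ M :=
  FractionalIdeal.extendedHom M (𝓞 M)

lemma extension_spanSingleton (x : F) :
    extension F M (FractionalIdeal.spanSingleton (𝓞 F)⁰ x) =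
      FractionalIdeal.spanSingleton (𝓞 M)⁰ (algebraMap F M x) := by
  have hmap : IsFractionRing.map (K := F) (L := M)
      (FaithfulSMul.algebraMap_injective (𝓞 F) (𝓞 M)) = algebraMap F M := by
    refine IsLocalization.ringHom_ext (𝓞 F)⁰ ?_
    rw [IsFractionRing.map, IsLocalization.map_comp]
    rfl
  rw [FractionalIdeal.extendedHom_spanSingleton, hmap]

lemma smul_extension (g : Gal(M/F)) (x : FractionalIdeal (𝓞 F)⁰ F) :
    g • extension F M x = extension F M x := by
  obtain ⟨a, J, -, rfl⟩ := FractionalIdeal.exists_eq_spanSingleton_mul x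
  rw [map_mul, extension_spanSingleton, FractionalIdeal.extendedHom_coeIdeal_eq_map, smul_mul',
    smul_spanSingleton, smul_coeIdeal, smul_map_algebraMap, g.commutes]

-- The denominator may be replaced by its norm.
lemma exists_extension_spanSingleton_mul_eq_coeIdeal (x : FractionalIdeal (𝓞 M)⁰ M) :
    ∃ n : F, n ≠ 0 ∧ ∃ J : Ideal (𝓞 M),
      extension F M (FractionalIdeal.spanSingleton (𝓞 F)⁰ n) * x = J := by
  obtain ⟨a, J, ha, rfl⟩ := FractionalIdeal.exists_eq_spanSingleton_mul x
  have hnorm := Ideal.relNorm_le_comap (𝓞 F) (Ideal.span {a})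
  rw [Ideal.relNorm_singleton] at hnorm
  obtain ⟨b, hb⟩ := Ideal.mem_span_singleton.1 (hnorm (Ideal.mem_span_singleton_self _))
  have hab : algebraMap F M (algebraMap (𝓞 F) F (Algebra.intNorm (𝓞 F) (𝓞 M) a)) =
      algebraMap (𝓞 M) M a * algebraMap (𝓞 M) M b := by
    rw [← map_mul, ← hb]
    rfl
  have ha' : algebraMap (𝓞 M) M a ≠ 0 := by simpa using ha
  refine ⟨algebraMap (𝓞 F) F (Algebra.intNorm (𝓞 F) (𝓞 M) a), ?_, Ideal.span {b} * J, ?_⟩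
  · simpa using (Algebra.intNorm_ne_zero (A := 𝓞 F)).2 ha
  · rw [extension_spanSingleton, hab, ← mul_assoc,
      FractionalIdeal.spanSingleton_mul_spanSingleton, mul_right_comm, mul_inv_cancel₀ ha', one_mul,
      FractionalIdeal.coeIdeal_mul, FractionalIdeal.coeIdeal_span_singleton]

lemma UnramifiedAtFinitePrimes.exists_extension_eq_of_smul_eq [IsGalois F M]
    (hFM : UnramifiedAtFinitePrimes F M) {x : FractionalIdeal (𝓞 M)⁰ M} (hx : x ≠ 0)
    (hinv : ∀ g : Gal(M/F), g • x = x) : ∃ y, extension F M y = x := by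
  obtain ⟨n, hn, J, hJ⟩ := exists_extension_spanSingleton_mul_eq_coeIdeal (F := F) x
  have hnM : extension F M (FractionalIdeal.spanSingleton (𝓞 F)⁰ n) ≠ 0 := by
    rw [extension_spanSingleton, Ne, FractionalIdeal.spanSingleton_eq_zero_iff]
    exact (map_ne_zero _).2 hn
  have hJbot : J ≠ ⊥ := FractionalIdeal.coeIdeal_ne_zero.1 (hJ ▸ mul_ne_zero hnM hx)
  have hJinv (g : Gal(M/F)) : g • J = J := FractionalIdeal.coeIdeal_injective (K := M) (by
    beta_reduce
    rw [← smul_coeIdeal, ← hJ, smul_mul', smul_extension, hinv])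
  obtain ⟨I, hI⟩ := hFM.exists_map_eq_of_smul_eq hJbot hJinv
  refine ⟨FractionalIdeal.spanSingleton (𝓞 F)⁰ n⁻¹ * (I : FractionalIdeal (𝓞 F)⁰ F),
    mul_left_cancel₀ hnM ?_⟩
  rw [hJ, ← map_mul, ← mul_assoc, FractionalIdeal.spanSingleton_mul_spanSingleton,
    mul_inv_cancel₀ hn, FractionalIdeal.spanSingleton_one, one_mul,
    FractionalIdeal.extendedHom_coeIdeal_eq_map, hI]

end FractionalIdeals

section PrincipalIdeals

variable (K : Type*) [Field K] [NumberField K]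

lemma index_range_toPrincipalIdeal_ne_zero : (toPrincipalIdeal (𝓞 K) K).range.index ≠ 0 := by
  have : Finite ((FractionalIdeal (𝓞 K)⁰ K)ˣ ⧸ (toPrincipalIdeal (𝓞 K) K).range) :=
    Finite.of_equiv _ (ClassGroup.equiv K).toEquiv
  exact Subgroup.index_ne_zero_of_finite

lemma ker_toPrincipalIdeal : (toPrincipalIdeal (𝓞 K) K).ker =
    (Units.map (algebraMap (𝓞 K) K : 𝓞 K →* K)).range := by
  ext x
  rw [MonoidHom.mem_ker, toPrincipalIdeal_eq_iff, Units.val_one]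
  constructor
  · intro hx
    have hx' : FractionalIdeal.spanSingleton (𝓞 K)⁰ ((x⁻¹ : Kˣ) : K) = 1 := by
      rw [Units.val_inv_eq_inv_val, ← FractionalIdeal.spanSingleton_inv, hx, inv_one]
    obtain ⟨a, ha⟩ := (FractionalIdeal.mem_one_iff _).1
      (hx ▸ FractionalIdeal.mem_spanSingleton_self (𝓞 K)⁰ (x : K))
    obtain ⟨b, hb⟩ := (FractionalIdeal.mem_one_iff _).1
      (hx' ▸ FractionalIdeal.mem_spanSingleton_self (𝓞 K)⁰ ((x⁻¹ : Kˣ) : K))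
    have hab : a * b = 1 := FaithfulSMul.algebraMap_injective (𝓞 K) K (by
      rw [map_mul, ha, hb, Units.mul_inv, map_one])
    exact ⟨Units.mkOfMulEqOne a b hab, Units.ext ha⟩
  · rintro ⟨u, rfl⟩
    change FractionalIdeal.spanSingleton (𝓞 K)⁰ (algebraMap (𝓞 K) K u) = 1
    rw [← FractionalIdeal.coeIdeal_span_singleton, Ideal.span_singleton_eq_top.2 u.isUnit,
      FractionalIdeal.coeIdeal_top]

lemma classGroupMk_surjective : Function.Surjective
    (ClassGroup.mk K : (FractionalIdeal (𝓞 K)⁰ K)ˣ →* ClassGroup (𝓞 K)) := fun c => by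
  obtain ⟨I, rfl⟩ := ClassGroup.mk0_surjective c
  exact ⟨_, ClassGroup.mk_mk0 K I⟩

lemma ker_classGroupMk :
    (ClassGroup.mk K : (FractionalIdeal (𝓞 K)⁰ K)ˣ →* ClassGroup (𝓞 K)).ker =
      (toPrincipalIdeal (𝓞 K) K).range := by
  ext z
  rw [MonoidHom.mem_ker, ClassGroup.mk_eq_one_iff, FractionalIdeal.isPrincipal_iff,
    mem_principal_ideals_iff]
  exact exists_congr fun x => eq_comm

end PrincipalIdeals

/-! ### Unramified cyclic cubic extensions -/

section CyclicAction

variable {G : Type*} [Group G] {σ : G}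

/-- The two-periodic complex of the units of `X`, acted on by an automorphism of order three. -/
def unitsComplex (hσ : σ ^ 3 = 1) (X : Type*) [CommMonoid X] [MulDistribMulAction G X] :
    TwoPeriodic Xˣ :=
  cubicComplex (Units.map (MulDistribMulAction.toMonoidHom X σ)) fun x => Units.ext <| by
    change σ • σ • σ • (x : X) = x
    rw [smul_smul, smul_smul, ← pow_two, ← pow_succ, hσ, one_smul]

lemma mem_ker_unitsComplex_δ {hσ : σ ^ 3 = 1} {X : Type*} [CommMonoid X]
    [MulDistribMulAction G X] {x : Xˣ} : x ∈ (unitsComplex hσ X).δ.ker ↔ σ • (x : X) = x := by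
  rw [unitsComplex, mem_ker_cubicComplex_δ, Units.ext_iff]
  rfl

lemma unitsComplex_δ_val {hσ : σ ^ 3 = 1} {X : Type*} [CommGroupWithZero X]
    [MulDistribMulAction G X] (x : Xˣ) : ((unitsComplex hσ X).δ x : X) = σ • (x : X) / x :=
  Units.val_div_eq_div_val _ _

lemma unitsComplex_ν_val {hσ : σ ^ 3 = 1} {X : Type*} [CommMonoid X] [MulDistribMulAction G X]
    (x : Xˣ) : ((unitsComplex hσ X).ν x : X) = x * σ • (x : X) * σ • σ • (x : X) := rfl

lemma smul_eq_of_mem_zpowers {X : Type*} [MulAction G X] {x : X} (hx : σ • x = x) {g : G}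
    (hg : g ∈ Subgroup.zpowers σ) : g • x = x :=
  (Subgroup.zpowers_le (H := MulAction.stabilizer G x)).2 hx hg

lemma prod_univ_of_card_eq_three [Fintype G] (hσ : ∀ g, g ∈ Subgroup.zpowers σ)
    (hcard : Nat.card G = 3) {X : Type*} [CommMonoid X] (f : G → X) :
    ∏ g, f g = f 1 * f σ * f (σ * σ) := by
  classical
  have hinj : Set.InjOn (fun i : ℕ => σ ^ i) (Finset.range (Nat.card G)) := by
    rw [← orderOf_eq_card_of_forall_mem_zpowers hσ, Finset.coe_range]
    exact pow_injOn_Iio_orderOf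
  rw [← IsCyclic.image_range_card hσ, Finset.prod_image hinj, hcard, Finset.prod_range_succ,
    Finset.prod_range_succ, Finset.prod_range_one, pow_zero, pow_one, pow_two]

end CyclicAction

section Generation

variable {K : Type*} [Field K] [NumberField K]

/-- A set of ideals whose classes generate the class group of `K` modulo cubes. -/
def GeneratesModCubes (S : Set (Ideal (𝓞 K))⁰) : Prop :=
  Subgroup.closure (ClassGroup.mk0 '' S) ⊔ (powMonoidHom 3 : ClassGroup (𝓞 K) →* _).range = ⊤

lemma GeneratesModCubes.eq_top {S : Set (Ideal (𝓞 K))⁰} (hS : GeneratesModCubes S)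
    {H : Subgroup (FractionalIdeal (𝓞 K)⁰ K)ˣ} (hprincipal : (toPrincipalIdeal (𝓞 K) K).range ≤ H)
    (hideals : ∀ I ∈ S, FractionalIdeal.mk0 K I ∈ H) (hcubes : ∀ x, x ^ 3 ∈ H) : H = ⊤ := by
  have hmap : H.map (ClassGroup.mk K : (FractionalIdeal (𝓞 K)⁰ K)ˣ →* _) = ⊤ := by
    rw [eq_top_iff, ← show _ = ⊤ from hS, sup_le_iff, Subgroup.closure_le]
    constructor
    · rintro _ ⟨I, hI, rfl⟩
      exact ⟨_, hideals I hI, ClassGroup.mk_mk0 K I⟩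
    · rintro _ ⟨c, rfl⟩
      obtain ⟨x, rfl⟩ := classGroupMk_surjective K c
      exact ⟨x ^ 3, hcubes x, map_pow _ _ _⟩
  rw [← sup_eq_left.2 hprincipal, ← ker_classGroupMk, ← Subgroup.comap_map_eq, hmap,
    Subgroup.comap_top]

end Generation

section Cubic

-- Hilbert's theorem 90 for group cohomology requires both fields to live in `Type`.
variable {F M : Type} [Field F] [Field M] [Algebra F M] {σ : Gal(M/F)}

lemma unitsComplex_isHom_algebraMap (hσ : σ ^ 3 = 1) : (unitsComplex hσ (𝓞 M)).IsHom
    (unitsComplex hσ M) (Units.map (algebraMap (𝓞 M) M : 𝓞 M →* M)) :=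
  cubicComplex_isHom fun _ => rfl

lemma unitsComplex_isHom_toPrincipalIdeal [NumberField M] (hσ : σ ^ 3 = 1) :
    (unitsComplex hσ M).IsHom
    (unitsComplex hσ (FractionalIdeal (𝓞 M)⁰ M)) (toPrincipalIdeal (𝓞 M) M) :=
  cubicComplex_isHom fun x => Units.ext <| by
    change _ = σ • (toPrincipalIdeal (𝓞 M) M x : FractionalIdeal (𝓞 M)⁰ M)
    rw [coe_toPrincipalIdeal, coe_toPrincipalIdeal, smul_spanSingleton]
    rfl

variable [NumberField F] [NumberField M] [IsGalois F M]

lemma ker_unitsComplex_δ_ringOfIntegers (hσ : σ ^ 3 = 1) (hgen : ∀ g, g ∈ Subgroup.zpowers σ) :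
    (unitsComplex hσ (𝓞 M)).δ.ker = (Units.map (algebraMap (𝓞 F) (𝓞 M) : 𝓞 F →* 𝓞 M)).range := by
  have exists_of_fixed (v : 𝓞 M) (hv : σ • v = v) : ∃ a, algebraMap (𝓞 F) (𝓞 M) a = v :=
    Algebra.IsInvariant.isInvariant (G := Gal(M/F)) v fun g => smul_eq_of_mem_zpowers hv (hgen g)
  ext u
  constructor
  · intro hu
    obtain ⟨a, ha⟩ := exists_of_fixed u (mem_ker_unitsComplex_δ.1 hu)
    obtain ⟨b, hb⟩ := exists_of_fixed ↑u⁻¹ (mem_ker_unitsComplex_δ.1 (inv_mem hu))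
    have hab : a * b = 1 := FaithfulSMul.algebraMap_injective (𝓞 F) (𝓞 M) (by
      rw [map_mul, ha, hb, Units.mul_inv, map_one])
    exact ⟨Units.mkOfMulEqOne a b hab, Units.ext ha⟩
  · rintro ⟨v, rfl⟩
    exact mem_ker_unitsComplex_δ.2 (smul_algebraMap σ (v : 𝓞 F))

lemma relIndex_cubes_fixedUnits (hσ : σ ^ 3 = 1) (hgen : ∀ g, g ∈ Subgroup.zpowers σ)
    (hF : ∀ x : F, x ^ 3 = 1 → x = 1) :
    ((unitsComplex hσ (𝓞 M)).δ.ker.map (powMonoidHom 3)).relIndex (unitsComplex hσ (𝓞 M)).δ.ker =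
      3 ^ Units.rank F := by
  have hinj : Function.Injective (Units.map (algebraMap (𝓞 F) (𝓞 M) : 𝓞 F →* 𝓞 M)) :=
    Units.map_injective (FaithfulSMul.algebraMap_injective (𝓞 F) (𝓞 M))
  rw [ker_unitsComplex_δ_ringOfIntegers hσ hgen, ← index_range_pow_units hF, ← map_range_pow,
    MonoidHom.range_eq_map (Units.map _), Subgroup.relIndex_map_map_of_injective _ _ hinj,
    Subgroup.relIndex_top_right]

lemma hilbert90 (hσ : σ ^ 3 = 1) (hgen : ∀ g, g ∈ Subgroup.zpowers σ)
    (hFM : Module.finrank F M = 3) :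
    (unitsComplex hσ M).ν.ker ≤ (unitsComplex hσ M).δ.range := by
  intro a ha
  have : IsCyclic Gal(M/F) := ⟨σ, hgen⟩
  have hnorm : Algebra.norm F (a : M) = 1 := (algebraMap F M).injective (by
    rw [Algebra.norm_eq_prod_automorphisms, map_one, prod_univ_of_card_eq_three hgen
      (by rw [IsGalois.card_aut_eq_finrank, hFM])]
    exact congrArg Units.val (MonoidHom.mem_ker.1 ha))
  obtain ⟨y, hy⟩ := groupCohomology.exists_div_of_norm_eq_one hgen hnorm
  refine ⟨y⁻¹, Units.ext ?_⟩
  rw [unitsComplex_δ_val, ← hy, Units.val_inv_eq_inv_val, smul_inv₀', inv_div_inv]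
  rfl

lemma ker_unitsComplex_δ_fractionalIdeal (hσ : σ ^ 3 = 1) (hgen : ∀ g, g ∈ Subgroup.zpowers σ)
    (hunram : UnramifiedAtFinitePrimes F M) :
    (unitsComplex hσ (FractionalIdeal (𝓞 M)⁰ M)).δ.ker =
      (Units.map (extension F M : FractionalIdeal (𝓞 F)⁰ F →* FractionalIdeal (𝓞 M)⁰ M)).range := by
  ext x
  constructor
  · intro hx
    obtain ⟨y, hy⟩ := hunram.exists_extension_eq_of_smul_eq x.ne_zero fun g =>
      smul_eq_of_mem_zpowers (mem_ker_unitsComplex_δ.1 hx) (hgen g)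
    have hy0 : y ≠ 0 := by
      rintro rfl
      exact x.ne_zero (hy.symm.trans (map_zero _))
    exact ⟨Units.mk0 y hy0, Units.ext hy⟩
  · rintro ⟨z, rfl⟩
    exact mem_ker_unitsComplex_δ.2 (smul_extension σ _)

lemma fixed_fractionalIdeals_le (hσ : σ ^ 3 = 1) (hgen : ∀ g, g ∈ Subgroup.zpowers σ)
    (hFM : Module.finrank F M = 3) (hunram : UnramifiedAtFinitePrimes F M)
    {S : Set (Ideal (𝓞 F))⁰} (hS : GeneratesModCubes S) (hprime : ∀ p ∈ S, p.1.IsPrime)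
    (hsplit : ∀ p ∈ S, (p.1.primesOver (𝓞 M)).ncard = 3) :
    (unitsComplex hσ (FractionalIdeal (𝓞 M)⁰ M)).δ.ker ≤
      (unitsComplex hσ M).δ.ker.map (toPrincipalIdeal (𝓞 M) M) ⊔
        (unitsComplex hσ (FractionalIdeal (𝓞 M)⁰ M)).ν.range := by
  have hcard : Nat.card Gal(M/F) = 3 := by rw [IsGalois.card_aut_eq_finrank, hFM]
  have hfixed := ker_unitsComplex_δ_fractionalIdeal hσ hgen hunram
  rw [hfixed, MonoidHom.range_eq_map, Subgroup.map_le_iff_le_comap, top_le_iff]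
  refine hS.eq_top ?_ (fun p hp => Subgroup.mem_sup_right ?_) fun x => Subgroup.mem_sup_right ?_
  · rintro _ ⟨f, rfl⟩
    refine Subgroup.mem_sup_left ⟨Units.map (algebraMap F M : F →* M) f,
      mem_ker_unitsComplex_δ.2 (σ.commutes f), Units.ext ?_⟩
    change toPrincipalIdeal (𝓞 M) M _ = extension F M (toPrincipalIdeal (𝓞 F) F f)
    rw [coe_toPrincipalIdeal, coe_toPrincipalIdeal, extension_spanSingleton]
    rfl
  · have hpbot : p.1 ≠ ⊥ := nonZeroDivisors.coe_ne_zero p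
    have := (hprime p hp).isMaximal hpbot
    obtain ⟨P, hP⟩ := Set.nonempty_of_ncard_ne_zero (hsplit p hp ▸ three_ne_zero)
    have := hP.2
    have hPbot := Ideal.ne_bot_of_liesOver_of_ne_bot hpbot P
    refine ⟨Units.mk0 (P : FractionalIdeal (𝓞 M)⁰ M) (FractionalIdeal.coeIdeal_ne_zero.2 hPbot),
      Units.ext ?_⟩
    change _ = extension F M (FractionalIdeal.mk0 F p)
    rw [FractionalIdeal.coe_mk0, FractionalIdeal.extendedHom_coeIdeal_eq_map,
      hunram.map_eq_prod_smul hpbot (by rw [hsplit p hp, hFM]) hP,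
      prod_univ_of_card_eq_three hgen hcard, unitsComplex_ν_val, Units.val_mk0, one_smul, mul_smul]
    simp only [smul_coeIdeal, FractionalIdeal.coeIdeal_mul]
  · refine ⟨Units.map (extension F M : FractionalIdeal (𝓞 F)⁰ F →* FractionalIdeal (𝓞 M)⁰ M) x, ?_⟩
    rw [map_pow]
    exact cubicComplex_ν_of_mem_ker_δ (hfixed.ge ⟨x, rfl⟩)

theorem not_generatesModCubes_of_unramified_cubic (hFM : Module.finrank F M = 3)
    (hM : ∀ x : M, x ^ 3 = 1 → x = 1) (hunram : UnramifiedAtFinitePrimes F M)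
    {S : Set (Ideal (𝓞 F))⁰} (hprime : ∀ p ∈ S, p.1.IsPrime)
    (hsplit : ∀ p ∈ S, (p.1.primesOver (𝓞 M)).ncard = 3) : ¬GeneratesModCubes S := by
  intro hS
  have hcard : Nat.card Gal(M/F) = 3 := by rw [IsGalois.card_aut_eq_finrank, hFM]
  have : Fact (Nat.Prime 3) := ⟨Nat.prime_three⟩
  obtain ⟨σ, hgen⟩ := (isCyclic_of_prime_card hcard).exists_generator
  have hσ : σ ^ 3 = 1 := hcard ▸ pow_card_eq_one'
  have hF (x : F) (hx : x ^ 3 = 1) : x = 1 := (algebraMap F M).injective (by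
    rw [map_one]
    exact hM _ (by rw [← map_pow, hx, map_one]))
  have hfixed := relIndex_cubes_fixedUnits hσ hgen hF
  have hherbrand : (unitsComplex hσ (𝓞 M)).hNegOne = 3 * (unitsComplex hσ (𝓞 M)).hZero :=
    hNegOne_eq_three_mul_hZero (units_eq_one_of_pow_eq_one hM)
      (by rw [index_range_pow_units hM, units_rank_of_finrank_eq_three F M hFM]) hfixed
  have hpos : (unitsComplex hσ (𝓞 M)).hZero ≠ 0 :=
    hZero_ne_zero (hfixed.trans_ne (pow_ne_zero _ three_ne_zero))
  have hchevalley : (unitsComplex hσ (𝓞 M)).hNegOne ≤ (unitsComplex hσ (𝓞 M)).hZero :=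
    hNegOne_le_hZero (unitsComplex_isHom_algebraMap hσ) (unitsComplex_isHom_toPrincipalIdeal hσ)
      (Units.map_injective (FaithfulSMul.algebraMap_injective (𝓞 M) M)) (ker_toPrincipalIdeal M)
      (hilbert90 hσ hgen hFM) (index_range_toPrincipalIdeal_ne_zero M)
      (fixed_fractionalIdeals_le hσ hgen hFM hunram hS hprime hsplit) hpos
  lia

end Cubic

/-! ### Abelian sextic Kummer extensions -/

section Tower

variable {F N : Type*} [Field F] [Field N] [NumberField F] [NumberField N] [Algebra F N]
  [IsGalois F N]

lemma perfectField_residueField {p : Ideal (𝓞 F)} [p.IsPrime] (hp : p ≠ ⊥) :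
    PerfectField p.ResidueField := by
  have : p.IsMaximal := Ideal.IsPrime.isMaximal inferInstance hp
  have : Finite (𝓞 F ⧸ p) := Ideal.finiteQuotientOfFreeOfNeBot p hp
  have : Finite p.ResidueField :=
    Finite.of_surjective (algebraMap (𝓞 F ⧸ p) p.ResidueField)
      (Ideal.bijective_algebraMap_quotient_residueField p).2
  infer_instance

variable (M : IntermediateField F N) [IsGalois F M] {q : ℕ} (hq : q.Prime)
  (hM : Module.finrank F M = q) {P : Ideal (𝓞 N)} [P.IsPrime] (hP : P ≠ ⊥)

include hq hM hP

lemma ramificationIdx_under_eq_one (hI : ¬q ∣ Nat.card (P.inertia Gal(N/F))) :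
    (P.under (𝓞 M)).ramificationIdx (𝓞 F) = 1 := by
  set p := P.under (𝓞 F) with hp
  have := perfectField_residueField (Ideal.under_ne_bot (𝓞 F) hP)
  have : (P.under (𝓞 M)).LiesOver p := ⟨by rw [hp, Ideal.under_under]⟩
  have hinertia := Ideal.card_inertia_eq_ramificationIdxIn (G := Gal(N/F)) p P
  rw [Ideal.ramificationIdxIn_eq_ramificationIdx p P Gal(N/F),
    Ideal.ramificationIdx_tower (P.under (𝓞 M)) P] at hinertia
  have hefg := Ideal.ncard_primesOver_mul_ramificationIdxIn_mul_inertiaDegIn p (𝓞 M) Gal(M/F)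
  rw [Ideal.ramificationIdxIn_eq_ramificationIdx p (P.under (𝓞 M)) Gal(M/F),
    IsGalois.card_aut_eq_finrank, hM] at hefg
  have hdvd : (P.under (𝓞 M)).ramificationIdx (𝓞 F) ∣ q :=
    ⟨(p.primesOver (𝓞 M)).ncard * p.inertiaDegIn (𝓞 M), by rw [← hefg]; ring⟩
  refine ((Nat.dvd_prime hq).1 hdvd).resolve_right fun h => hI ?_
  rw [hinertia, h]
  exact dvd_mul_right q _

lemma ncard_primesOver_under_eq (hD : ¬q ∣ Nat.card (MulAction.stabilizer Gal(N/F) P)) :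
    ((P.under (𝓞 F)).primesOver (𝓞 M)).ncard = q := by
  set p := P.under (𝓞 F) with hp
  have := perfectField_residueField (Ideal.under_ne_bot (𝓞 F) hP)
  have : (P.under (𝓞 M)).LiesOver p := ⟨by rw [hp, Ideal.under_under]⟩
  have hdecomposition := Ideal.card_stabilizer_eq (G := Gal(N/F)) p P
  rw [Ideal.ramificationIdxIn_eq_ramificationIdx p P Gal(N/F),
    Ideal.inertiaDegIn_eq_inertiaDeg p P Gal(N/F),
    Ideal.ramificationIdx_tower (P.under (𝓞 M)) P,
    Ideal.inertiaDeg_tower (P.under (𝓞 M)) P] at hdecomposition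
  have hefg := Ideal.ncard_primesOver_mul_ramificationIdxIn_mul_inertiaDegIn p (𝓞 M) Gal(M/F)
  rw [Ideal.ramificationIdxIn_eq_ramificationIdx p (P.under (𝓞 M)) Gal(M/F),
    Ideal.inertiaDegIn_eq_inertiaDeg p (P.under (𝓞 M)) Gal(M/F),
    IsGalois.card_aut_eq_finrank, hM] at hefg
  refine ((Nat.dvd_prime hq).1 ⟨_, hefg.symm⟩).resolve_left fun h => hD ?_
  rw [h, one_mul] at hefg
  rw [hdecomposition, ← hefg]
  exact ⟨P.ramificationIdx (𝓞 M) * P.inertiaDeg (𝓞 M), by ring⟩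

end Tower

section CubeRoots

lemma sq_add_self_add_one_eq_zero {R : Type*} [CommRing R] [IsDomain R] {ζ : R}
    (hζ : IsPrimitiveRoot ζ 3) : ζ ^ 2 + ζ + 1 = 0 := by
  have h := hζ.geom_sum_eq_zero (by norm_num)
  rw [Finset.sum_range_succ, Finset.sum_range_succ, Finset.sum_range_one] at h
  linear_combination h

lemma exists_eq_pow_mul_of_pow_eq {K : Type*} [Field K] {ζ : K} {n : ℕ} [NeZero n]
    (hζ : IsPrimitiveRoot ζ n) {x y : K} (hy : y ≠ 0) (hxy : x ^ n = y ^ n) :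
    ∃ i < n, x = ζ ^ i * y := by
  obtain ⟨i, hi, h⟩ := hζ.eq_pow_of_pow_eq_one
    (show (x / y) ^ n = 1 by rw [div_pow, hxy, div_self (pow_ne_zero n hy)])
  exact ⟨i, hi, by rw [h, div_mul_cancel₀ x hy]⟩

end CubeRoots

section AlgHom

variable {F L N : Type*} [Field F] [Field L] [Field N] [Algebra F L] [Algebra F N]

lemma algHom_ext_of_adjoin_eq_top {s : Set L} (hs : IntermediateField.adjoin F s = ⊤)
    {f g : L →ₐ[F] N} (h : Set.EqOn f g s) : f = g := by
  ext x
  have hx : x ∈ IntermediateField.adjoin F s := hs ▸ IntermediateField.mem_top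
  induction hx using IntermediateField.adjoin_induction with
  | mem y hy => exact h hy
  | algebraMap y => rw [f.commutes, g.commutes]
  | add x y _ _ hx hy => rw [map_add, map_add, hx, hy]
  | inv x _ hx => rw [map_inv₀, map_inv₀, hx]
  | mul x y _ _ hx hy => rw [map_mul, map_mul, hx, hy]

end AlgHom

section Sextic

variable {F N : Type*} [Field F] [Field N] [Algebra F N]

/-- `N` is generated over `F` by a primitive cube root of unity `ζ` and a cube root `t` of
`A + C√-3`, where `√-3 = ζ - ζ²`, in such a way that the norm `A² + 3C²` is the cube of `n`. The
last condition makes `N` abelian over `F`. -/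
structure KummerSextic (ζ t : N) (A C n : F) : Prop where
  isPrimitiveRoot : IsPrimitiveRoot ζ 3
  ne_zero : t ≠ 0
  norm_ne_zero : n ≠ 0
  pow_three : t ^ 3 = algebraMap F N A + algebraMap F N C * (ζ - ζ ^ 2)
  norm_eq : A ^ 2 + 3 * C ^ 2 = n ^ 3
  adjoin_eq_top : IntermediateField.adjoin F {ζ, t} = ⊤
  finrank_eq : Module.finrank F N = 6

/-- `σ` is the generator of `Gal(N/F(ζ))` which multiplies the Kummer generator `t` by `ζ`. -/
def IsKummerRotation (ζ t : N) (σ : Gal(N/F)) : Prop := σ ζ = ζ ∧ σ t = ζ * t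

lemma pow_apply_of_fixes {ζ t : N} {g : Gal(N/F)} (hgζ : g ζ = ζ) {i : ℕ}
    (hgt : g t = ζ ^ i * t) (k : ℕ) : (g ^ k) ζ = ζ ∧ (g ^ k) t = ζ ^ (i * k) * t := by
  induction k with
  | zero => simp
  | succ k ih =>
    rw [pow_succ', AlgEquiv.mul_apply, AlgEquiv.mul_apply, ih.1, ih.2, hgζ, map_mul, map_pow,
      hgζ, hgt]
    exact ⟨rfl, by ring⟩

namespace KummerSextic

variable {ζ t : N} {A C n : F} (h : KummerSextic ζ t A C n)

include h

lemma zeta_pow_three : ζ ^ 3 = 1 := h.isPrimitiveRoot.pow_eq_one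

lemma zeta_ne_sq : ζ ≠ ζ ^ 2 := fun heq => absurd
  (h.isPrimitiveRoot.pow_inj (i := 1) (j := 2) (by norm_num) (by norm_num) (by rwa [pow_one]))
  (by norm_num)

lemma algEquiv_cases (g : Gal(N/F)) :
    (g ζ = ζ ∧ ∃ i < 3, g t = ζ ^ i * t) ∨
      (g ζ = ζ ^ 2 ∧ ∃ i < 3, g t = ζ ^ i * (algebraMap F N n / t)) := by
  have hζ := sq_add_self_add_one_eq_zero h.isPrimitiveRoot
  have hgζ : g ζ ^ 2 + g ζ + 1 = 0 := by simpa using congrArg g hζ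
  have hroots : (g ζ - ζ) * (g ζ - ζ ^ 2) = 0 := by
    linear_combination hgζ + (ζ - 1 - g ζ) * hζ
  have hgt := congrArg g h.pow_three
  simp only [map_pow, map_add, map_mul, map_sub, AlgEquiv.commutes] at hgt
  rcases mul_eq_zero.1 hroots with hfix | hswap
  · have hfix : g ζ = ζ := sub_eq_zero.1 hfix
    exact .inl ⟨hfix, exists_eq_pow_mul_of_pow_eq h.isPrimitiveRoot h.ne_zero
      (by rw [hgt, hfix, h.pow_three])⟩
  · have hswap : g ζ = ζ ^ 2 := sub_eq_zero.1 hswap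
    have hn : algebraMap F N n ≠ 0 := (map_ne_zero _).2 h.norm_ne_zero
    refine .inr ⟨hswap, exists_eq_pow_mul_of_pow_eq h.isPrimitiveRoot
      (div_ne_zero hn h.ne_zero) ?_⟩
    have hnorm := congrArg (algebraMap F N) h.norm_eq
    simp only [map_pow, map_add, map_mul, map_ofNat] at hnorm
    rw [hgt, hswap, div_pow, eq_div_iff (pow_ne_zero 3 h.ne_zero), ← hnorm, h.pow_three]
    linear_combination (algebraMap F N A * algebraMap F N C * (ζ - ζ ^ 2) +
      algebraMap F N C ^ 2 * (ζ ^ 4 - 2 * ζ ^ 3 + 3 * ζ - 3)) * hζ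

lemma algEquiv_ext {g g' : Gal(N/F)} (hζ : g ζ = g' ζ) (ht : g t = g' t) : g = g' := by
  refine AlgEquiv.coe_toAlgHom_injective (algHom_ext_of_adjoin_eq_top h.adjoin_eq_top ?_)
  rintro x (rfl | rfl)
  exacts [hζ, ht]

lemma algEquiv_mul_comm (g g' : Gal(N/F)) : g * g' = g' * g := by
  have hζ0 : ζ ≠ 0 := h.isPrimitiveRoot.ne_zero three_ne_zero
  have ht0 := h.ne_zero
  have hn0 : algebraMap F N n ≠ 0 := (map_ne_zero _).2 h.norm_ne_zero
  have hinv (i : ℕ) : (ζ ^ 2) ^ i * ζ ^ i = 1 := by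
    rw [← mul_pow, ← pow_succ, h.zeta_pow_three, one_pow]
  rcases h.algEquiv_cases g with ⟨hgζ, i, -, hgt⟩ | ⟨hgζ, i, -, hgt⟩ <;>
  rcases h.algEquiv_cases g' with ⟨hgζ', j, -, hgt'⟩ | ⟨hgζ', j, -, hgt'⟩ <;>
  apply h.algEquiv_ext <;>
  simp only [AlgEquiv.mul_apply, hgζ, hgζ', hgt, hgt', map_mul, map_pow, map_div₀,
    AlgEquiv.commutes]
  · ring
  · field_simp
    linear_combination -hinv i
  · field_simp
    linear_combination hinv j
  · field_simp
    linear_combination hinv j - hinv i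

lemma pow_three_eq_one {g : Gal(N/F)} (hgζ : g ζ = ζ) : g ^ 3 = 1 := by
  obtain ⟨-, i, -, hgt⟩ | ⟨hswap, -⟩ := h.algEquiv_cases g
  · obtain ⟨hζ, ht⟩ := pow_apply_of_fixes hgζ hgt 3
    refine h.algEquiv_ext hζ ?_
    rw [ht, mul_comm i, pow_mul, h.zeta_pow_three, one_pow, one_mul, AlgEquiv.one_apply]
  · exact absurd (hgζ.symm.trans hswap) h.zeta_ne_sq

lemma exists_pow_isKummerRotation {g : Gal(N/F)} (hg : g ^ 3 = 1) (hg1 : g ≠ 1) :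
    ∃ k, IsKummerRotation ζ t (g ^ k) := by
  obtain ⟨hgζ, i, hi, hgt⟩ | ⟨hgζ, -⟩ := h.algEquiv_cases g
  · refine ⟨i, (pow_apply_of_fixes hgζ hgt i).1, ?_⟩
    rw [(pow_apply_of_fixes hgζ hgt i).2]
    interval_cases i
    · exact absurd (h.algEquiv_ext hgζ (by rw [hgt, pow_zero, one_mul]; rfl)) hg1
    · rw [one_mul, pow_one]
    · linear_combination ζ * t * h.zeta_pow_three
  · have hgζ3 : (g ^ 3) ζ = ζ ^ 2 := by
      simp only [pow_succ, pow_zero, one_mul, AlgEquiv.mul_apply, map_mul, hgζ]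
      linear_combination ζ ^ 2 * (ζ ^ 3 + 1) * h.zeta_pow_three
    rw [hg, AlgEquiv.one_apply] at hgζ3
    exact absurd hgζ3 h.zeta_ne_sq

lemma not_three_dvd_card [FiniteDimensional F N] {H : Subgroup Gal(N/F)}
    (hH : ∀ σ ∈ H, ¬IsKummerRotation ζ t σ) : ¬3 ∣ Nat.card H := by
  intro hdvd
  have : Fact (Nat.Prime 3) := ⟨Nat.prime_three⟩
  obtain ⟨g, hg⟩ := exists_prime_orderOf_dvd_card' (G := H) 3 hdvd
  rw [← Subgroup.orderOf_coe, orderOf_eq_prime_iff] at hg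
  obtain ⟨k, hk⟩ := h.exists_pow_isKummerRotation hg.1 hg.2
  exact hH _ (H.pow_mem g.2 k) hk

variable [IsGalois F N]

lemma exists_involution : ∃ τ : Gal(N/F), orderOf τ = 2 ∧ τ ζ = ζ ^ 2 := by
  have : FiniteDimensional F N := .of_finrank_pos (by rw [h.finrank_eq]; norm_num)
  have : Fact (Nat.Prime 2) := ⟨Nat.prime_two⟩
  obtain ⟨τ, hτ⟩ := exists_prime_orderOf_dvd_card' (G := Gal(N/F)) 2
    (by rw [IsGalois.card_aut_eq_finrank, h.finrank_eq]; norm_num)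
  refine ⟨τ, hτ, ?_⟩
  obtain ⟨hfix, -⟩ | ⟨hswap, -⟩ := h.algEquiv_cases τ
  · have hdvd := orderOf_dvd_of_pow_eq_one (h.pow_three_eq_one hfix)
    rw [hτ] at hdvd
    norm_num at hdvd
  · exact hswap

lemma exists_cubic_subfield : ∃ M : IntermediateField F N, IsGalois F M ∧
    Module.finrank F M = 3 ∧ ∀ x : M, x ^ 3 = 1 → x = 1 := by
  have : FiniteDimensional F N := .of_finrank_pos (by rw [h.finrank_eq]; norm_num)
  obtain ⟨τ, hτ, hτζ⟩ := h.exists_involution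
  have hnormal : (Subgroup.zpowers τ).Normal := ⟨fun x hx g => by
    rwa [h.algEquiv_mul_comm g x, mul_assoc, mul_inv_cancel, mul_one]⟩
  refine ⟨IntermediateField.fixedField (Subgroup.zpowers τ),
    IsGalois.of_fixedField_normal_subgroup _, ?_, fun x hx => ?_⟩
  · have hdeg := Module.finrank_mul_finrank F (fixedField (Subgroup.zpowers τ)) N
    rw [IntermediateField.finrank_fixedField_eq_card, Nat.card_zpowers, hτ, h.finrank_eq] at hdeg
    omega
  · obtain ⟨i, -, hi⟩ := h.isPrimitiveRoot.eq_pow_of_pow_eq_one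
      (show (x : N) ^ 3 = 1 from congrArg Subtype.val hx)
    have hfix : τ (x : N) = x := x.2 ⟨τ, Subgroup.mem_zpowers τ⟩
    have hζ0 : ζ ^ i ≠ 0 := pow_ne_zero i (h.isPrimitiveRoot.ne_zero three_ne_zero)
    rw [← hi, map_pow, hτζ, ← pow_mul, mul_comm, pow_mul, pow_two, mul_eq_left₀ hζ0] at hfix
    exact Subtype.ext (hi.symm.trans hfix)

end KummerSextic

end Sextic

theorem KummerSextic.not_generatesModCubes {F N : Type} [Field F] [Field N] [NumberField F]
    [NumberField N] [Algebra F N] [IsGalois F N] {ζ t : N} {A C n : F}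
    (h : KummerSextic ζ t A C n)
    (hunram : ∀ P : Ideal (𝓞 N), P ≠ ⊥ → P.IsPrime → ∀ σ : Gal(N/F), IsKummerRotation ζ t σ →
      ∃ x : 𝓞 N, σ • x - x ∉ P)
    {S : Set (Ideal (𝓞 F))⁰} (hprime : ∀ p ∈ S, p.1.IsPrime)
    (hdecomp : ∀ p ∈ S, ∃ P : Ideal (𝓞 N), P.IsPrime ∧ P ≠ ⊥ ∧ P.under (𝓞 F) = p.1 ∧
      ∀ σ : Gal(N/F), IsKummerRotation ζ t σ → σ • P ≠ P) :
    ¬GeneratesModCubes S := by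
  obtain ⟨M, _, hM, hMone⟩ := h.exists_cubic_subfield
  refine not_generatesModCubes_of_unramified_cubic (M := M) hM hMone ?_ hprime ?_
  · intro Q hQ hQprime
    have : Q.IsMaximal := hQprime.isMaximal hQ
    obtain ⟨P, _, hPQ⟩ := Ideal.exists_maximal_ideal_liesOver_of_isIntegral (S := 𝓞 N) Q
    have hP : P ≠ ⊥ := Ideal.ne_bot_of_liesOver_of_ne_bot hQ P
    rw [hPQ.over]
    refine ramificationIdx_under_eq_one M Nat.prime_three hM hP (h.not_three_dvd_card ?_)
    intro σ hσ hrot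
    obtain ⟨x, hx⟩ := hunram P hP inferInstance σ hrot
    exact hx (hσ x)
  · intro p hp
    obtain ⟨P, _, hP, hPp, hmoved⟩ := hdecomp p hp
    rw [← hPp]
    exact ncard_primesOver_under_eq M Nat.prime_three hM hP
      (h.not_three_dvd_card fun σ hσ hrot => hmoved σ hrot hσ)

/-! ### Inertia and decomposition in cubic Kummer extensions -/

section LocalRepresentative

variable {R : Type*} [CommRing R] [IsDedekindDomain R]

lemma exists_span_singleton_eq_mul_not_le {b : Ideal R} (hb : b ≠ ⊥) (Q : Ideal R) [Q.IsPrime] :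
    ∃ (x : R) (c : Ideal R), Ideal.span {x} = b * c ∧ ¬c ≤ Q := by
  have hlt : ¬b ≤ b * Q := fun hle => Ideal.IsPrime.ne_top ‹_› <|
    ((mul_eq_left₀ hb).1 (le_antisymm Ideal.mul_le_left hle)).trans Ideal.one_eq_top
  obtain ⟨x, hxb, hxQ⟩ := SetLike.not_le_iff_exists.1 hlt
  obtain ⟨c, hc⟩ := Ideal.dvd_iff_le.2 ((Ideal.span_singleton_le_iff_mem b).2 hxb)
  refine ⟨x, c, hc, fun hcQ => hxQ ?_⟩
  rw [← Ideal.span_singleton_le_iff_mem, hc]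
  exact Ideal.mul_mono_right hcQ

lemma exists_pow_mul_eq_pow_mul_notMem {γ : R} (hγ : γ ≠ 0) {b : Ideal R} {n : ℕ} (hn : n ≠ 0)
    (hb : Ideal.span {γ} = b ^ n) (Q : Ideal R) [hQ : Q.IsPrime] :
    ∃ x e y : R, x ≠ 0 ∧ e ^ n * γ = x ^ n * y ∧ y ∉ Q := by
  have hbn : b ^ n ≠ ⊥ := by rwa [← hb, Ne, Ideal.span_singleton_eq_bot]
  have hb0 : b ≠ ⊥ := fun h => hbn (by rw [h, Ideal.bot_pow hn])
  obtain ⟨x, c, hxc, hcQ⟩ := exists_span_singleton_eq_mul_not_le hb0 Q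
  obtain ⟨e, hec, heQ⟩ := SetLike.not_le_iff_exists.1 hcQ
  have hmem : e ^ n * γ ∈ Ideal.span {x ^ n} := by
    rw [← Ideal.span_singleton_pow, hxc, mul_pow, mul_comm (b ^ n), ← hb]
    exact Ideal.mul_mem_mul (Ideal.pow_mem_pow hec n) (Ideal.mem_span_singleton_self γ)
  obtain ⟨y, hy⟩ := Ideal.mem_span_singleton'.1 hmem
  have hspan : Ideal.span {e ^ n} = Ideal.span {y} * c ^ n := by
    refine mul_right_cancel₀ hbn ?_
    rw [mul_assoc, ← mul_pow c b, mul_comm c b, ← hxc, ← hb]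
    simp only [Ideal.span_singleton_pow, Ideal.span_singleton_mul_span_singleton, hy]
  refine ⟨x, e, y, ?_, by rw [← hy, mul_comm], fun hyQ => heQ (hQ.mem_of_pow_mem n ?_)⟩
  · rintro rfl
    refine hcQ (le_of_eq_of_le ?_ bot_le)
    exact (mul_eq_zero.1 (hxc.symm.trans (Ideal.span_singleton_eq_bot.2 rfl))).resolve_left hb0
  · rw [← Ideal.span_singleton_le_iff_mem, hspan]
    exact Ideal.mul_le_left.trans ((Ideal.span_singleton_le_iff_mem Q).2 hyQ)

end LocalRepresentative

section IntegrallyClosed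

variable {S : Type*} [CommRing S] [IsDomain S] [IsIntegrallyClosed S]

lemma dvd_of_cubic_eq_zero {s x a b c : S}
    (h : x ^ 3 + s * a * x ^ 2 + s ^ 2 * b * x + s ^ 3 * c = 0) : s ∣ x := by
  rcases eq_or_ne s 0 with rfl | hs
  · have hx : x ^ 3 = 0 := by linear_combination h
    rw [eq_zero_of_pow_eq_zero hx]
  have hs' : algebraMap S (FractionRing S) s ≠ 0 := by
    rwa [Ne, FaithfulSMul.algebraMap_eq_zero_iff]
  have hint : IsIntegral S (algebraMap S (FractionRing S) x / algebraMap S _ s) := by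
    refine ⟨.X ^ 3 + .C a * .X ^ 2 + .C b * .X + .C c, by monicity!, ?_⟩
    simp only [Polynomial.eval₂_add, Polynomial.eval₂_mul, Polynomial.eval₂_pow,
      Polynomial.eval₂_X, Polynomial.eval₂_C]
    have h' := congrArg (algebraMap S (FractionRing S)) h
    simp only [map_add, map_mul, map_pow, map_zero] at h'
    field_simp
    linear_combination h'
  obtain ⟨y, hy⟩ := IsIntegrallyClosed.isIntegral_iff.1 hint
  refine ⟨y, FaithfulSMul.algebraMap_injective S (FractionRing S) ?_⟩
  rw [map_mul, hy, mul_div_cancel₀ _ hs']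

end IntegrallyClosed

section KummerAction

variable {S G : Type*} [CommRing S] [Group G] [MulSemiringAction G S] {σ : G} {ζ T : S}
  {P : Ideal S}

lemma sub_one_notMem_of_three_notMem (hζ : ζ ^ 2 + ζ + 1 = 0) (h3 : (3 : S) ∉ P) :
    ζ - 1 ∉ P := by
  intro h
  have hfactor : (3 : S) = (ζ - 1) * (-ζ - 2) := by linear_combination hζ
  exact h3 (hfactor ▸ P.mul_mem_right _ h)

-- With `s = ζ - ζ²`, the element `(T - u) / s` is integral, and `σ` moves it by `-ζ² T`.
lemma exists_smul_sub_notMem_of_cube_sub_cube_eq [IsDomain S] [IsIntegrallyClosed S]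
    [CharZero S] (hζ : ζ ^ 2 + ζ + 1 = 0) (hσζ : σ • ζ = ζ) (hσT : σ • T = ζ * T) (hT : T ∉ P)
    {u w : S} (hu : σ • u = u)
    (hTu : T ^ 3 - u ^ 3 = 3 * (ζ - ζ ^ 2) * w) : ∃ z : S, σ • z - z ∉ P := by
  obtain ⟨s, hs⟩ : ∃ s, s = ζ - ζ ^ 2 := ⟨_, rfl⟩
  rw [← hs] at hTu
  have hs2 : s ^ 2 = -3 := by
    rw [hs]
    linear_combination (ζ ^ 2 - 3 * ζ + 3) * hζ
  have hs0 : s ≠ 0 := fun h => OfNat.ofNat_ne_zero (R := S) 3 (by linear_combination hs2 - s * h)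
  obtain ⟨z, hz⟩ : s ∣ T - u := dvd_of_cubic_eq_zero (a := -s * u) (b := -u ^ 2) (c := w) (by
    linear_combination hTu + (s * w - u ^ 2 * (T - u) - u * (T - u) ^ 2) * hs2)
  have hσz : σ • z - z = -ζ ^ 2 * T := by
    refine mul_left_cancel₀ hs0 ?_
    have h := congrArg (σ • ·) hz
    have hσs : σ • s = s := by rw [hs, smul_sub, smul_pow', hσζ]
    simp only [smul_mul', smul_sub, hσs, hσT, hu] at h
    linear_combination -h + hz - T * (ζ - 1) ^ 2 * hζ + ζ ^ 2 * T * hs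
  refine ⟨z, fun hmem => hT ?_⟩
  have hunit : T = -ζ * (-ζ ^ 2 * T) := by linear_combination (1 - ζ) * T * hζ
  rw [hunit, ← hσz]
  exact P.mul_mem_left _ hmem

variable [hP : P.IsPrime]

lemma smul_ne_of_sub_mem (hζ : ζ ^ 2 + ζ + 1 = 0) (hσT : σ • T = ζ * T) (h3 : (3 : S) ∉ P)
    (hT : T ∉ P) {y : S} (hy : σ • y = y) (hTy : T - y ∈ P) : σ • P ≠ P := by
  intro hσP
  have hσ : σ • (T - y) ∈ P := hσP ▸ Ideal.smul_mem_pointwise_smul σ _ P hTy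
  rw [smul_sub, hσT, hy] at hσ
  have hmul : (ζ - 1) * T ∈ P := by
    convert P.sub_mem hσ hTy using 1
    ring
  exact (hP.mem_or_mem hmul).elim (sub_one_notMem_of_three_notMem hζ h3) hT

lemma smul_ne_of_cube_sub_cube_mem (hζ : ζ ^ 2 + ζ + 1 = 0) (hσζ : σ • ζ = ζ)
    (hσT : σ • T = ζ * T) (h3 : (3 : S) ∉ P) (hT : T ∉ P) {v : S} (hv : σ • v = v)
    (hTv : T ^ 3 - v ^ 3 ∈ P) : σ • P ≠ P := by
  have hfactor : T ^ 3 - v ^ 3 = (T - v) * ((T - ζ * v) * (T - ζ ^ 2 * v)) := by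
    linear_combination (T ^ 2 * v - T * v ^ 2 * ζ + v ^ 3 * (ζ - 1)) * hζ
  rw [hfactor] at hTv
  have hne {y : S} (hy : σ • y = y) : T - y ∈ P → σ • P ≠ P := smul_ne_of_sub_mem hζ hσT h3 hT hy
  rcases hP.mem_or_mem hTv with h | h
  · exact hne hv h
  rcases hP.mem_or_mem h with h | h
  · exact hne (by rw [smul_mul', hσζ, hv]) h
  · exact hne (by rw [smul_mul', smul_pow', hσζ, hv]) h

variable [IsDomain S] [IsIntegrallyClosed S]

lemma exists_smul_sub_notMem_of_three_notMem (hζ : ζ ^ 2 + ζ + 1 = 0) (hσT : σ • T = ζ * T)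
    (h3 : (3 : S) ∉ P) {x e y : S} (hσx : σ • x = x) (hσe : σ • e = e) (hx : x ≠ 0)
    (hxey : e ^ 3 * T ^ 3 = x ^ 3 * y) (hy : y ∉ P) : ∃ z : S, σ • z - z ∉ P := by
  obtain ⟨z, hz⟩ : x ∣ e * T :=
    (IsIntegrallyClosed.pow_dvd_pow_iff three_ne_zero).1 ⟨y, by rw [mul_pow, hxey]⟩
  have hz3 : z ^ 3 = y := by
    refine mul_left_cancel₀ (pow_ne_zero 3 hx) ?_
    rw [← hxey, ← mul_pow, ← mul_pow, hz]
  have hσz : σ • z - z = (ζ - 1) * z := by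
    refine mul_left_cancel₀ hx ?_
    have h := congrArg (σ • ·) hz
    simp only [smul_mul', hσx, hσe, hσT] at h
    linear_combination (ζ - 1) * hz - h + hz
  refine ⟨z, fun hmem => ?_⟩
  rw [hσz] at hmem
  refine (hP.mem_or_mem hmem).elim (sub_one_notMem_of_three_notMem hζ h3) fun h => hy ?_
  exact hz3 ▸ P.pow_mem_of_mem h 3 three_pos

end KummerAction

/-! ### Cube roots of singular primary numbers -/

section Tower

variable {F L N : Type*} [Field F] [Field L] [Field N] [Algebra F L] [Algebra F N] [Algebra L N]
  [IsScalarTower F L N]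

lemma adjoin_pair_eq_top {z : L} (hz : IntermediateField.adjoin F {z} = ⊤) {t : N}
    (ht : IntermediateField.adjoin L {t} = ⊤) :
    IntermediateField.adjoin F {algebraMap L N z, t} = ⊤ := by
  set K := IntermediateField.adjoin F {algebraMap L N z, t}
  have hle : (IntermediateField.adjoin F {z}).map (IsScalarTower.toAlgHom F L N) ≤ K := by
    rw [IntermediateField.adjoin_map, Set.image_singleton]
    exact IntermediateField.adjoin.mono _ _ _ (Set.singleton_subset_iff.2 (Or.inl rfl))
  have hLK (x : L) : algebraMap L N x ∈ K :=
    hle ⟨x, by rw [hz]; trivial, rfl⟩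
  have htK : IntermediateField.adjoin L {t} ≤ K.toSubfield.toIntermediateField hLK :=
    IntermediateField.adjoin_simple_le_iff.2
      (IntermediateField.subset_adjoin F _ (Or.inr rfl))
  rw [ht] at htK
  exact eq_top_iff.2 fun x _ => htK IntermediateField.mem_top

lemma kummerSextic_of_tower (hFL : Module.finrank F L = 2) (hLN : Module.finrank L N = 3)
    {ζ γ : L} (hζ : IsPrimitiveRoot ζ 3) (hL : IntermediateField.adjoin F {ζ} = ⊤)
    {A C n : F} (hγ : γ = algebraMap F L A + algebraMap F L C * (ζ - ζ ^ 2))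
    (hγ0 : γ ≠ 0) (hn : A ^ 2 + 3 * C ^ 2 = n ^ 3) (hn0 : n ≠ 0) {t : N}
    (ht : t ^ 3 = algebraMap L N γ) (hN : IntermediateField.adjoin L {t} = ⊤) :
    KummerSextic (algebraMap L N ζ) t A C n where
  isPrimitiveRoot := hζ.map_of_injective (algebraMap L N).injective
  ne_zero := by
    rintro rfl
    rw [zero_pow three_ne_zero, eq_comm, map_eq_zero] at ht
    exact hγ0 ht
  norm_ne_zero := hn0
  pow_three := by
    rw [ht, hγ]
    simp only [map_add, map_mul, map_sub, map_pow, ← IsScalarTower.algebraMap_apply]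
  norm_eq := hn
  adjoin_eq_top := adjoin_pair_eq_top hL hN
  finrank_eq := by rw [← Module.finrank_mul_finrank F L N, hFL, hLN]

end Tower

section Galois

open Polynomial

variable {F N : Type*} [Field F] [Field N] [Algebra F N] {ζ t : N} {A C n : F}

/-- The polynomial whose roots are the cube roots of unity and the conjugates of the Kummer
generator of a `KummerSextic`. -/
noncomputable def sexticPoly (A n : F) : F[X] :=
  (X ^ 3 - 1) * (X ^ 6 - Polynomial.C (2 * A) * X ^ 3 + Polynomial.C (n ^ 3))

namespace KummerSextic

lemma map_sexticPoly (h : KummerSextic ζ t A C n) :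
    (sexticPoly A n).map (algebraMap F N) = (X ^ 3 - Polynomial.C 1) *
      ((X ^ 3 - Polynomial.C (t ^ 3)) *
        (X ^ 3 - Polynomial.C ((algebraMap F N n / t) ^ 3))) := by
  have hprod : t ^ 3 * (algebraMap F N n / t) ^ 3 = algebraMap F N (n ^ 3) := by
    rw [map_pow, ← mul_pow, mul_div_cancel₀ _ h.ne_zero]
  have hconj : (algebraMap F N n / t) ^ 3 =
      algebraMap F N A - algebraMap F N C * (ζ - ζ ^ 2) := by
    refine mul_left_cancel₀ (pow_ne_zero 3 h.ne_zero) ?_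
    rw [hprod, ← h.norm_eq, h.pow_three]
    simp only [map_add, map_mul, map_pow, map_ofNat]
    linear_combination algebraMap F N C ^ 2 * (ζ ^ 2 - 3 * ζ + 3) *
      sq_add_self_add_one_eq_zero h.isPrimitiveRoot
  have hsum : algebraMap F N (2 * A) = t ^ 3 + (algebraMap F N n / t) ^ 3 := by
    rw [hconj, h.pow_three, map_mul, map_ofNat]
    ring
  simp only [sexticPoly, Polynomial.map_mul, Polynomial.map_add, Polynomial.map_sub,
    Polynomial.map_pow, Polynomial.map_X, Polynomial.map_one, Polynomial.map_C]
  rw [hsum, ← hprod, map_add, map_mul, map_one]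
  ring

lemma isSplittingField (h : KummerSextic ζ t A C n) : IsSplittingField F N (sexticPoly A n) := by
  have hmap := h.map_sexticPoly
  have hroot {y : N} (hy : y ^ 3 = 1 ∨ y ^ 3 = t ^ 3) : y ∈ (sexticPoly A n).rootSet N := by
    have hne : (sexticPoly A n).map (algebraMap F N) ≠ 0 := by
      rw [hmap]
      exact mul_ne_zero (X_pow_sub_C_ne_zero three_pos _)
        (mul_ne_zero (X_pow_sub_C_ne_zero three_pos _) (X_pow_sub_C_ne_zero three_pos _))
    rw [mem_rootSet_of_ne (fun h0 => hne (by rw [h0, Polynomial.map_zero])),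
      ← eval_map_algebraMap, hmap]
    rcases hy with hy | hy <;> simp [hy]
  rw [isSplittingField_iff_intermediateField]
  constructor
  · rw [hmap]
    exact (X_pow_sub_C_splits_of_isPrimitiveRoot h.isPrimitiveRoot (one_pow 3)).mul
      ((X_pow_sub_C_splits_of_isPrimitiveRoot h.isPrimitiveRoot rfl).mul
        (X_pow_sub_C_splits_of_isPrimitiveRoot h.isPrimitiveRoot rfl))
  · rw [eq_top_iff, ← h.adjoin_eq_top]
    refine IntermediateField.adjoin.mono _ _ _ ?_
    rintro y (rfl | rfl)
    · exact hroot (.inl h.zeta_pow_three)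
    · exact hroot (.inr rfl)

lemma isGalois [CharZero F] (h : KummerSextic ζ t A C n) : IsGalois F N := by
  have := h.isSplittingField
  have : Normal F N := Normal.of_isSplittingField (sexticPoly A n)
  exact ⟨⟩

end KummerSextic

end Galois

section SingularPrimary

variable {F L N : Type} [Field F] [Field L] [Field N] [Algebra F L] [Algebra F N] [Algebra L N]
  [IsScalarTower F L N]

/-- A nonzero integer `γ` is *singular primary* for the cube root of unity `ζ` if it generates the
cube of an ideal, is prime to `3` and is congruent to a cube modulo `3√-3`, where
`√-3 = ζ - ζ²`. Adjoining its cube root is then unramified at all finite primes. -/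
structure IsSingularPrimary (ζ γ : 𝓞 L) : Prop where
  ne_zero : γ ≠ 0
  exists_span_eq_pow : ∃ b : Ideal (𝓞 L), Ideal.span {γ} = b ^ 3
  isCoprime_three : IsCoprime γ 3
  exists_dvd_sub_pow : ∃ u, 3 * (ζ - ζ ^ 2) ∣ γ - u ^ 3

/-- `γ` is prime to the ideal `Q`, which does not lie above `3`, and a cube modulo `Q`. -/
structure IsCubicResidue (γ : 𝓞 L) (Q : Ideal (𝓞 L)) : Prop where
  three_notMem : 3 ∉ Q
  notMem : γ ∉ Q
  exists_sub_pow_mem : ∃ v, γ - v ^ 3 ∈ Q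

lemma isIntegral_of_pow_eq_algebraMap {γ : 𝓞 L} {t : N} {n : ℕ} (hn : 0 < n)
    (ht : t ^ n = algebraMap L N γ) : IsIntegral ℤ t := by
  refine IsIntegral.of_pow hn ?_
  rw [ht]
  exact (RingOfIntegers.isIntegral_coe γ).map (algebraMap L N).toIntAlgHom

lemma smul_algebraMap_eq_of_adjoin_eq_top {ζ : 𝓞 L}
    (hL : IntermediateField.adjoin F {(ζ : L)} = ⊤) {σ : Gal(N/F)}
    (hσ : σ (algebraMap L N ζ) = algebraMap L N ζ) (x : 𝓞 L) :
    σ • algebraMap (𝓞 L) (𝓞 N) x = algebraMap (𝓞 L) (𝓞 N) x := by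
  have hcomp : σ.toAlgHom.comp (IsScalarTower.toAlgHom F L N) = IsScalarTower.toAlgHom F L N :=
    algHom_ext_of_adjoin_eq_top hL (Set.eqOn_singleton.2 hσ)
  exact RingOfIntegers.ext (DFunLike.congr_fun hcomp (x : L))

lemma IsCubicResidue.smul_ne {ζ γ : 𝓞 L} (hζ : IsPrimitiveRoot ζ 3)
    (hL : IntermediateField.adjoin F {(ζ : L)} = ⊤) {T : 𝓞 N}
    (hT : T ^ 3 = algebraMap (𝓞 L) (𝓞 N) γ) {σ : Gal(N/F)}
    (hσ : IsKummerRotation (algebraMap L N ζ) (T : N) σ) {P : Ideal (𝓞 N)} [P.IsPrime]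
    (h : IsCubicResidue γ (P.under (𝓞 L))) : σ • P ≠ P := by
  have hfix := smul_algebraMap_eq_of_adjoin_eq_top (N := N) hL hσ.1
  have hζN := sq_add_self_add_one_eq_zero
    (hζ.map_of_injective (FaithfulSMul.algebraMap_injective (𝓞 L) (𝓞 N)))
  obtain ⟨v, hv⟩ := h.exists_sub_pow_mem
  refine smul_ne_of_cube_sub_cube_mem hζN (hfix ζ) (RingOfIntegers.ext hσ.2) ?_ ?_ (hfix v) ?_
  · exact fun h3 => h.three_notMem (by rwa [Ideal.mem_comap, map_ofNat])
  · exact fun hTP => h.notMem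
      (by rw [Ideal.mem_comap, ← hT]; exact P.pow_mem_of_mem hTP 3 three_pos)
  · rwa [Ideal.mem_comap, map_sub, map_pow, ← hT] at hv

variable [NumberField L] [NumberField N]

lemma IsSingularPrimary.exists_smul_sub_notMem {ζ γ : 𝓞 L} (h : IsSingularPrimary ζ γ)
    (hζ : IsPrimitiveRoot ζ 3) (hL : IntermediateField.adjoin F {(ζ : L)} = ⊤) {T : 𝓞 N}
    (hT : T ^ 3 = algebraMap (𝓞 L) (𝓞 N) γ) {σ : Gal(N/F)}
    (hσ : IsKummerRotation (algebraMap L N ζ) (T : N) σ) (P : Ideal (𝓞 N)) [P.IsPrime] :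
    ∃ x : 𝓞 N, σ • x - x ∉ P := by
  have hfix := smul_algebraMap_eq_of_adjoin_eq_top (N := N) hL hσ.1
  have hσT : σ • T = algebraMap (𝓞 L) (𝓞 N) ζ * T := RingOfIntegers.ext hσ.2
  have hζN := sq_add_self_add_one_eq_zero
    (hζ.map_of_injective (FaithfulSMul.algebraMap_injective (𝓞 L) (𝓞 N)))
  by_cases h3 : (3 : 𝓞 N) ∈ P
  · obtain ⟨u, w, hu⟩ := h.exists_dvd_sub_pow
    refine exists_smul_sub_notMem_of_cube_sub_cube_eq hζN (hfix ζ) hσT ?_ (hfix u)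
      (w := algebraMap (𝓞 L) (𝓞 N) w) ?_
    · intro hTP
      obtain ⟨a, b, hab⟩ := h.isCoprime_three.map (algebraMap (𝓞 L) (𝓞 N))
      rw [← hT, map_ofNat] at hab
      refine Ideal.IsPrime.ne_top ‹P.IsPrime› ((Ideal.eq_top_iff_one P).2 ?_)
      rw [← hab]
      exact P.add_mem (P.mul_mem_left a (P.pow_mem_of_mem hTP 3 three_pos)) (P.mul_mem_left b h3)
    · rw [hT]
      simpa only [map_sub, map_mul, map_pow, map_ofNat] using
        congrArg (algebraMap (𝓞 L) (𝓞 N)) hu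
  · obtain ⟨b, hb⟩ := h.exists_span_eq_pow
    obtain ⟨x, e, y, hx, hxey, hy⟩ :=
      exists_pow_mul_eq_pow_mul_notMem h.ne_zero three_ne_zero hb (P.under (𝓞 L))
    refine exists_smul_sub_notMem_of_three_notMem hζN hσT h3 (hfix x) (hfix e) ?_ ?_ hy
    · rwa [Ne, FaithfulSMul.algebraMap_eq_zero_iff]
    · rw [hT]
      simpa only [map_mul, map_pow] using congrArg (algebraMap (𝓞 L) (𝓞 N)) hxey

end SingularPrimary

theorem IsSingularPrimary.not_generatesModCubes {F L : Type} [Field F] [Field L] [NumberField F]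
    [NumberField L] [Algebra F L] (hFL : Module.finrank F L = 2) {ζ γ : 𝓞 L}
    (h : IsSingularPrimary ζ γ) (hζ : IsPrimitiveRoot ζ 3)
    (hL : IntermediateField.adjoin F {(ζ : L)} = ⊤) {A C n : F}
    (hγ : (γ : L) = algebraMap F L A + algebraMap F L C * (ζ - (ζ : L) ^ 2))
    (hn : A ^ 2 + 3 * C ^ 2 = n ^ 3) (hn0 : n ≠ 0) (hcube : ∀ x : L, x ^ 3 ≠ γ)
    {S : Set (Ideal (𝓞 F))⁰} (hprime : ∀ p ∈ S, p.1.IsPrime)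
    (hresidue : ∀ p ∈ S, ∃ Q : Ideal (𝓞 L), Q.IsPrime ∧ Q ≠ ⊥ ∧ Q.under (𝓞 F) = p.1 ∧
      IsCubicResidue γ Q) : ¬GeneratesModCubes S := by
  have hirr : Irreducible (Polynomial.X ^ 3 - Polynomial.C (γ : L)) :=
    X_pow_sub_C_irreducible_of_prime Nat.prime_three hcube
  have : Fact (Irreducible (Polynomial.X ^ 3 - Polynomial.C (γ : L))) := ⟨hirr⟩
  let N := AdjoinRoot (Polynomial.X ^ 3 - Polynomial.C (γ : L))
  let t : N := AdjoinRoot.root _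
  have hfin : Module.Finite L N := (AdjoinRoot.powerBasis hirr.ne_zero).finite
  have : NumberField N := NumberField.of_module_finite L N
  have hLN : Module.finrank L N = 3 := by
    rw [(AdjoinRoot.powerBasis hirr.ne_zero).finrank, AdjoinRoot.powerBasis_dim]
    exact Polynomial.natDegree_X_pow_sub_C
  have ht : t ^ 3 = algebraMap L N γ := by
    have hroot := AdjoinRoot.eval₂_root (Polynomial.X ^ 3 - Polynomial.C (γ : L))
    rw [Polynomial.eval₂_sub, Polynomial.eval₂_pow, Polynomial.eval₂_X,
      Polynomial.eval₂_C] at hroot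
    exact sub_eq_zero.1 hroot
  have hγ0 : (γ : L) ≠ 0 := RingOfIntegers.coe_ne_zero_iff.2 h.ne_zero
  have hζL : IsPrimitiveRoot (ζ : L) 3 := hζ.map_of_injective RingOfIntegers.coe_injective
  have hK := kummerSextic_of_tower hFL hLN hζL hL hγ hγ0 hn hn0 ht
    (IntermediateField.adjoin_root_eq_top _)
  have := hK.isGalois
  let T : 𝓞 N := ⟨t, isIntegral_of_pow_eq_algebraMap three_pos ht⟩
  have hT : T ^ 3 = algebraMap (𝓞 L) (𝓞 N) γ := RingOfIntegers.ext ht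
  refine hK.not_generatesModCubes
    (fun P _ _ σ hσ => h.exists_smul_sub_notMem hζ hL hT hσ P) hprime fun p hp => ?_
  obtain ⟨Q, hQ, hQ0, hQp, hres⟩ := hresidue p hp
  have : Q.IsMaximal := hQ.isMaximal hQ0
  obtain ⟨P, _, hPQ⟩ := Ideal.exists_maximal_ideal_liesOver_of_isIntegral (S := 𝓞 N) Q
  refine ⟨P, inferInstance, Ideal.ne_bot_of_liesOver_of_ne_bot hQ0 P, ?_, fun σ hσ => ?_⟩
  · rw [← hQp, hPQ.over, Ideal.under_under]
  · exact IsCubicResidue.smul_ne hζ hL hT hσ (hPQ.over ▸ hres)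

/-! ### Primes generating the class group modulo cubes -/

section PowerSubgroups

variable {G : Type*} [CommGroup G] {p : ℕ} [Fact p.Prime]

lemma prime_dvd_relIndex_of_range_pow_le {H K : Subgroup G}
    (hH : (powMonoidHom p : G →* G).range ≤ H) (hHK : ¬K ≤ H) : p ∣ H.relIndex K := by
  obtain ⟨s, hsK, hsH⟩ := Set.not_subset.1 hHK
  have horder : orderOf ((⟨s, hsK⟩ : K) : K ⧸ H.subgroupOf K) = p := by
    apply orderOf_eq_prime
    · rw [← QuotientGroup.mk_pow, QuotientGroup.eq_one_iff, Subgroup.mem_subgroupOf]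
      exact hH ⟨s, rfl⟩
    · rwa [Ne, QuotientGroup.eq_one_iff, Subgroup.mem_subgroupOf]
  exact horder ▸ orderOf_dvd_natCard _

variable [Finite G]

lemma prime_mul_index_le {H K : Subgroup G} (hH : (powMonoidHom p : G →* G).range ≤ H)
    (hHK : H < K) : p * K.index ≤ H.index := by
  rw [← Subgroup.relIndex_mul_index hHK.le]
  exact Nat.mul_le_mul_right _ (Nat.le_of_dvd Nat.card_pos
    (prime_dvd_relIndex_of_range_pow_le hH (not_le_of_gt hHK)))

lemma exists_finset_closure_image_sup_eq_top {ι : Type*} {f : ι → G} {S : Set ι} {H : Subgroup G}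
    (hH : (powMonoidHom p : G →* G).range ≤ H) (hS : Subgroup.closure (f '' S) ⊔ H = ⊤) :
    ∃ T : Finset ι, ↑T ⊆ S ∧ Subgroup.closure (f '' T) ⊔ H = ⊤ ∧ p ^ T.card ≤ H.index := by
  classical
  induction h : H.index using Nat.strong_induction_on generalizing H with
  | _ n ih =>
    subst h
    by_cases hSH : f '' S ⊆ H
    · refine ⟨∅, by simp, ?_, ?_⟩
      · rw [sup_eq_right.2 ((Subgroup.closure_le _).2 hSH)] at hS
        simp [hS]
      · simpa using Nat.one_le_iff_ne_zero.2 H.index_ne_zero_of_finite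
    · obtain ⟨_, ⟨s, hs, rfl⟩, hsH⟩ := Set.not_subset.1 hSH
      set K := Subgroup.closure {f s} ⊔ H
      have hsK : f s ∈ K := Subgroup.mem_sup_left (Subgroup.subset_closure rfl)
      have hHK : H < K := lt_of_le_of_ne le_sup_right fun h => hsH (h ▸ hsK)
      have hindex : p * K.index ≤ H.index := prime_mul_index_le hH hHK
      obtain ⟨T, hTS, hT, hcard⟩ := ih K.index (Subgroup.index_strictAnti hHK) (hH.trans hHK.le)
        (top_le_iff.1 (hS ▸ sup_le_sup_left hHK.le _)) rfl
      refine ⟨insert s T, by simp [Set.insert_subset_iff, hs, hTS], ?_, ?_⟩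
      · rw [Finset.coe_insert, Set.image_insert_eq, Set.insert_eq, Subgroup.closure_union,
          sup_comm (Subgroup.closure {f s}), sup_assoc]
        exact hT
      · calc p ^ (insert s T).card ≤ p ^ (T.card + 1) :=
              Nat.pow_le_pow_right (Fact.out : p.Prime).pos (Finset.card_insert_le _ _)
          _ = p * p ^ T.card := pow_succ' _ _
          _ ≤ p * K.index := Nat.mul_le_mul_left _ hcard
          _ ≤ H.index := hindex

end PowerSubgroups

section DedekindDomain

variable {R : Type*} [CommRing R] [IsDedekindDomain R]

lemma exists_ne_zero_mul_sup_span_singleton_eq {I J : Ideal R} (hI : I ≠ ⊥) (hJ : J ≠ ⊥) :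
    ∃ x, x ≠ 0 ∧ I * J ⊔ Ideal.span {x} = I := by
  obtain ⟨x, hx⟩ := IsDedekindDomain.exists_sup_span_eq (I := I * J) (J := I)
    Ideal.mul_le_left (mul_ne_zero hI hJ)
  by_cases hx0 : x = 0
  · obtain ⟨y, hy, hy0⟩ := Submodule.exists_mem_ne_zero_of_ne_bot hI
    have hIJ : I * J = I := by simpa [hx0] using hx
    exact ⟨y, hy0, by rw [hIJ, sup_eq_left, Ideal.span_singleton_le_iff_mem]; exact hy⟩
  · exact ⟨x, hx0, hx⟩

lemma exists_mk0_eq_and_sup_eq_top (c : ClassGroup R) {J : Ideal R} (hJ : J ≠ ⊥) :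
    ∃ a : (Ideal R)⁰, ClassGroup.mk0 a = c ∧ a.1 ⊔ J = ⊤ := by
  obtain ⟨I, hI⟩ := ClassGroup.mk0_surjective c⁻¹
  have hI0 : I.1 ≠ ⊥ := nonZeroDivisors.ne_zero I.2
  obtain ⟨x, hx0, hx⟩ := exists_ne_zero_mul_sup_span_singleton_eq hI0 hJ
  obtain ⟨a, ha⟩ := Ideal.dvd_iff_le.2 (le_sup_right.trans_eq hx)
  have ha0 : a ≠ ⊥ := by
    rintro rfl
    exact hx0 (Ideal.span_singleton_eq_bot.1 (ha.trans (Ideal.mul_bot _)))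
  refine ⟨⟨a, mem_nonZeroDivisors_of_ne_zero ha0⟩, ?_, ?_⟩
  · have hprincipal : ClassGroup.mk0 (I * ⟨a, mem_nonZeroDivisors_of_ne_zero ha0⟩) = 1 :=
      (ClassGroup.mk0_eq_one_iff _).2 ⟨x, ha.symm⟩
    rw [map_mul, hI] at hprincipal
    exact (inv_mul_eq_one.1 hprincipal).symm
  · rw [ha, ← Ideal.mul_sup, sup_comm] at hx
    exact mul_left_cancel₀ hI0 (hx.trans (Ideal.mul_top _).symm)

lemma ideal_eq_of_pow_eq_pow {I J : Ideal R} {n : ℕ} (hn : n ≠ 0) (h : I ^ n = J ^ n) : I = J :=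
  dvd_antisymm ((UniqueFactorizationMonoid.pow_dvd_pow_iff_dvd hn).1 h.dvd)
    ((UniqueFactorizationMonoid.pow_dvd_pow_iff_dvd hn).1 h.symm.dvd)

lemma mk0_mem_closure_isPrime_sup_eq_top {J a : Ideal R} (haJ : a ⊔ J = ⊤) (ha : a ∈ (Ideal R)⁰) :
    ClassGroup.mk0 ⟨a, ha⟩ ∈ Subgroup.closure
      (ClassGroup.mk0 '' {p : (Ideal R)⁰ | p.1.IsPrime ∧ p.1 ⊔ J = ⊤}) := by
  induction a using UniqueFactorizationMonoid.induction_on_prime with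
  | h₁ => exact absurd rfl (nonZeroDivisors.ne_zero ha)
  | h₂ a hunit =>
    have hone : (⟨a, ha⟩ : (Ideal R)⁰) = 1 := Subtype.ext (isUnit_iff_eq_one.1 hunit)
    rw [hone, map_one]
    exact Subgroup.one_mem _
  | h₃ a p ha0 hp ih =>
    have hp0 : p ∈ (Ideal R)⁰ := mem_nonZeroDivisors_of_ne_zero hp.ne_zero
    have ha0 : a ∈ (Ideal R)⁰ := mem_nonZeroDivisors_of_ne_zero ha0
    have hmul : (⟨p * a, ha⟩ : (Ideal R)⁰) = ⟨p, hp0⟩ * ⟨a, ha0⟩ := rfl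
    rw [hmul, map_mul]
    have hpJ : p ⊔ J = ⊤ := top_le_iff.1 (haJ ▸ sup_le_sup_right Ideal.mul_le_left _)
    exact Subgroup.mul_mem _
      (Subgroup.subset_closure ⟨⟨p, hp0⟩, ⟨Ideal.isPrime_of_prime hp, hpJ⟩, rfl⟩)
      (ih (top_le_iff.1 (haJ ▸ sup_le_sup_right Ideal.mul_le_right _)) ha0)

lemma closure_mk0_isPrime_sup_eq_top {J : Ideal R} (hJ : J ≠ ⊥) :
    Subgroup.closure (ClassGroup.mk0 '' {p : (Ideal R)⁰ | p.1.IsPrime ∧ p.1 ⊔ J = ⊤}) = ⊤ := by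
  refine eq_top_iff.2 fun c _ => ?_
  obtain ⟨a, rfl, haJ⟩ := exists_mk0_eq_and_sup_eq_top c hJ
  exact mk0_mem_closure_isPrime_sup_eq_top haJ a.2

lemma exists_span_singleton_eq_pow {c : ClassGroup R} {n : ℕ} (hc : c ^ n = 1) {J : Ideal R}
    (hJ : J ≠ ⊥) : ∃ (a : (Ideal R)⁰) (α : R),
      ClassGroup.mk0 a = c ∧ a.1 ⊔ J = ⊤ ∧ Ideal.span {α} = a.1 ^ n := by
  obtain ⟨a, hac, haJ⟩ := exists_mk0_eq_and_sup_eq_top c hJ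
  obtain ⟨α, hα⟩ := (ClassGroup.mk0_eq_one_iff (a ^ n).2).1 (by rw [← hc, ← hac, ← map_pow])
  exact ⟨a, α, hac, haJ, hα.symm⟩

end DedekindDomain

lemma exists_finset_isPrime_generatesModCubes {K : Type*} [Field K] [NumberField K]
    {J : Ideal (𝓞 K)} (hJ : J ≠ ⊥) : ∃ T : Finset (Ideal (𝓞 K))⁰,
      (∀ p ∈ T, p.1.IsPrime ∧ p.1 ⊔ J = ⊤) ∧ GeneratesModCubes (T : Set (Ideal (𝓞 K))⁰) ∧
      3 ^ T.card ≤ clTor K 3 := by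
  have hgen := closure_mk0_isPrime_sup_eq_top hJ
  have : Fact (Nat.Prime 3) := ⟨Nat.prime_three⟩
  obtain ⟨T, hTJ, hT, hcard⟩ := exists_finset_closure_image_sup_eq_top (p := 3)
    (f := (ClassGroup.mk0 : (Ideal (𝓞 K))⁰ →* ClassGroup (𝓞 K)))
    (H := (powMonoidHom 3 : ClassGroup (𝓞 K) →* _).range) le_rfl (by rw [hgen, top_sup_eq])
  exact ⟨T, hTJ, hT, hcard.trans_eq Subgroup.index_range⟩

/-! ### The cubic invariant at 3 -/

section

variable {m : ℤ}

lemma zsqrtd_map_eq {R : Type*} [CommRing R] (φ : ℤ√m →+* R) (z : ℤ√m) :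
    φ z = z.re + z.im * φ Zsqrtd.sqrtd :=
  (RingHom.congr_fun (Zsqrtd.lift.apply_symm_apply φ) z).symm

/-- The elements of `ℤ[√m]` whose norm is the cube of an integer prime to `3`. Generators of cubes
of ideals prime to `3` lie here, up to a factor `8`. -/
def cubeNorms (m : ℤ) : Submonoid (ℤ√m) where
  carrier := {z | ∃ k : ℤ, ¬3 ∣ k ∧ z.norm = k ^ 3}
  one_mem' := ⟨1, by norm_num, by simp⟩
  mul_mem' := by
    rintro z z' ⟨k, hk, hz⟩ ⟨k', hk', hz'⟩
    exact ⟨k * k', Int.prime_three.not_dvd_mul hk hk', by rw [Zsqrtd.norm_mul, hz, hz', mul_pow]⟩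

lemma zmod_nine_pow_six_eq_one {k : ℤ} (hk : ¬3 ∣ k) : (k : ZMod 9) ^ 6 = 1 := by
  have hcoprime : IsCoprime k (9 : ℕ) :=
    (Int.prime_three.coprime_iff_not_dvd.2 hk).symm.pow_right (n := 2)
  have htotient : Nat.totient 9 = 6 := by decide
  have hpow := congrArg Units.val (ZMod.pow_totient (ZMod.unitOfIsCoprime k hcoprime))
  rwa [Units.val_pow_eq_pow_val, ZMod.coe_unitOfIsCoprime, htotient] at hpow

lemma norm_pow_eight_modEq_one {z : ℤ√m} (hz : z ∈ cubeNorms m) : 9 ∣ (z ^ 8).norm - 1 := by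
  obtain ⟨k, hk, hz⟩ := hz
  have hnorm : (z ^ 8).norm = (k ^ 6) ^ 4 := by
    change Zsqrtd.normMonoidHom (z ^ 8) = _
    rw [map_pow]
    change z.norm ^ 8 = _
    rw [hz]
    ring
  refine (ZMod.intCast_zmod_eq_zero_iff_dvd _ 9).1 ?_
  rw [hnorm]
  push_cast
  rw [zmod_nine_pow_six_eq_one hk, one_pow, sub_self]

/-- The squaring map of `𝔽₃[√m]` in coordinates. -/
def sqModThree (m : ZMod 3) (w : ZMod 3 × ZMod 3) : ZMod 3 × ZMod 3 :=
  (w.1 * w.1 + m * w.2 * w.2, w.1 * w.2 + w.2 * w.1)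

lemma sqModThree_iterate_three (m : ZMod 3) (w : ZMod 3 × ZMod 3) :
    w.1 * w.1 - m * w.2 * w.2 ≠ 0 →
      ((sqModThree m)^[3] w).1 = 1 ∧ m * ((sqModThree m)^[3] w).2 = 0 := by
  decide +revert

lemma sqModThree_iterate_three_eq (z : ℤ√m) :
    (sqModThree m)^[3] (z.re, z.im) = (((z ^ 8).re : ZMod 3), ((z ^ 8).im : ZMod 3)) := by
  have hpow : z ^ 8 = ((z * z) * (z * z)) * ((z * z) * (z * z)) := by ring
  rw [hpow]
  simp [sqModThree]

lemma three_dvd_re_im_pow_eight {z : ℤ√m} (hz : z ∈ cubeNorms m) :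
    3 ∣ (z ^ 8).re - 1 ∧ 3 ∣ m * (z ^ 8).im := by
  obtain ⟨k, hk, hz⟩ := hz
  have hnorm : (z.re : ZMod 3) * z.re - m * z.im * z.im ≠ 0 := by
    have h : ((z.norm : ℤ) : ZMod 3) ≠ 0 := by
      rw [hz, Ne, ZMod.intCast_zmod_eq_zero_iff_dvd]
      exact fun h => hk (Int.prime_three.dvd_of_dvd_pow h)
    rw [Zsqrtd.norm_def] at h
    exact_mod_cast h
  have h := sqModThree_iterate_three m (z.re, z.im) hnorm
  rw [sqModThree_iterate_three_eq] at h
  constructor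
  · exact (ZMod.intCast_zmod_eq_zero_iff_dvd _ 3).1 (by push_cast; exact sub_eq_zero.2 h.1)
  · exact (ZMod.intCast_zmod_eq_zero_iff_dvd _ 3).1 (by push_cast; exact h.2)

/-- The obstruction to `z ∈ cubeNorms m` being a cube modulo `3√-3`. The eighth power is `1` modulo
the primes above `3`, and its irrational part, multiplied by `√m / 3`, is then well defined modulo
`3`; the division is exact on `cubeNorms m`. -/
def cubicInvariant (z : ℤ√m) : ZMod 3 := (m * (z ^ 8).im / 3 : ℤ)

lemma cubicInvariant_mul {z z' : ℤ√m} (hz : z ∈ cubeNorms m) (hz' : z' ∈ cubeNorms m) :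
    cubicInvariant (z * z') = cubicInvariant z + cubicInvariant z' := by
  obtain ⟨⟨x, hx⟩, ⟨y, hy⟩⟩ := three_dvd_re_im_pow_eight hz
  obtain ⟨⟨x', hx'⟩, ⟨y', hy'⟩⟩ := three_dvd_re_im_pow_eight hz'
  have him : m * ((z * z') ^ 8).im = 3 * (y + y' + 3 * (x * y' + x' * y)) := by
    rw [mul_pow, Zsqrtd.im_mul]
    linear_combination (3 * y') * hx + (z ^ 8).re * hy' + (z' ^ 8).re * hy + (3 * y) * hx'
  simp only [cubicInvariant, him, hy, hy', Int.mul_ediv_cancel_left _ (three_ne_zero' ℤ)]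
  push_cast
  rw [show (3 : ZMod 3) = 0 from rfl, zero_mul, add_zero]

lemma nine_dvd_of_cubicInvariant_eq_zero {z : ℤ√m} (hz : z ∈ cubeNorms m)
    (h : cubicInvariant z = 0) : 9 ∣ m * (z ^ 8).im ∧ 9 ∣ (z ^ 8).re - 1 := by
  obtain ⟨⟨x, hx⟩, ⟨y, hy⟩⟩ := three_dvd_re_im_pow_eight hz
  obtain ⟨t, ht⟩ : 3 ∣ y := by
    rw [cubicInvariant, hy, Int.mul_ediv_cancel_left _ (three_ne_zero' ℤ)] at h
    exact (ZMod.intCast_zmod_eq_zero_iff_dvd _ 3).1 h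
  obtain ⟨n, hn⟩ := norm_pow_eight_modEq_one hz
  refine ⟨⟨t, by rw [hy, ht]; ring⟩, ?_⟩
  have hre : 3 * (2 * x) = 9 * (n + t * (z ^ 8).im - x ^ 2) := by
    rw [Zsqrtd.norm_def] at hn
    linear_combination hn - ((z ^ 8).re + 1 + 3 * x) * hx + (z ^ 8).im * (hy + 3 * ht)
  omega

lemma three_mul_dvd_sub_pow_of_cubicInvariant_eq_zero {R : Type*} [CommRing R] [IsDomain R]
    [IsIntegrallyClosed R] (φ : ℤ√m →+* R) {s : R} (hs : s ^ 2 = -3) (hm : ¬9 ∣ m) {z : ℤ√m}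
    (hz : z ∈ cubeNorms m) (h : cubicInvariant z = 0) : 3 * s ∣ φ z - (φ z ^ 3) ^ 3 := by
  obtain ⟨⟨y, hy⟩, ⟨x, hx⟩⟩ := nine_dvd_of_cubicInvariant_eq_zero hz h
  obtain ⟨t, ht⟩ : 3 ∣ (z ^ 8).im := by
    by_contra h3
    exact hm (((Int.prime_three.coprime_iff_not_dvd.2 h3).pow_left (m := 2)).dvd_of_dvd_mul_right
      ⟨y, hy⟩)
  have hsqrtd : φ Zsqrtd.sqrtd ^ 2 = m := by
    rw [← map_pow, sq, Zsqrtd.dmuld, map_intCast]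
  have him : 3 * s ∣ (z ^ 8).im * φ Zsqrtd.sqrtd := by
    rw [← IsIntegrallyClosed.pow_dvd_pow_iff two_ne_zero]
    refine ⟨-(y * t), ?_⟩
    have hcast : (m : R) * (z ^ 8).im ^ 2 = 27 * (y * t) := by
      have hint : m * (z ^ 8).im ^ 2 = 27 * (y * t) := by
        linear_combination (z ^ 8).im * hy + 9 * y * ht
      exact_mod_cast congrArg (Int.cast : ℤ → R) hint
    linear_combination ((z ^ 8).im : R) ^ 2 * hsqrtd + hcast + 9 * (y * t : R) * hs
  obtain ⟨w, hw⟩ := him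
  have hpow : φ z ^ 8 = 1 + 9 * x + (z ^ 8).im * φ Zsqrtd.sqrtd := by
    have hre : ((z ^ 8).re : R) = 1 + 9 * x := by
      exact_mod_cast congrArg (Int.cast : ℤ → R) (eq_add_of_sub_eq' hx)
    rw [← map_pow, zsqrtd_map_eq, hre]
  refine ⟨-φ z * (-s * x + w), ?_⟩
  linear_combination -φ z * hpow - φ z * hw - 3 * φ z * x * hs

end

/-! ### Integers of quadratic fields -/

section

section QuadraticExtension

variable {F K : Type*} [Field F] [Field K] [Algebra F K]

lemma exists_basis_one_of_finrank_eq_two (h2 : Module.finrank F K = 2) {δ : K}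
    (hδ : δ ∉ (algebraMap F K).range) : ∃ b : Module.Basis (Fin 2) F K, b 0 = 1 ∧ b 1 = δ := by
  have hli : LinearIndependent F ![(1 : K), δ] := by
    rw [LinearIndependent.pair_iff' one_ne_zero]
    exact fun a ha => hδ ⟨a, by rw [← ha, Algebra.algebraMap_eq_smul_one]⟩
  exact ⟨basisOfLinearIndependentOfCardEqFinrank hli (by simp [h2]), by simp, by simp⟩

lemma exists_eq_add_mul (h2 : Module.finrank F K = 2) {δ : K} (hδ : δ ∉ (algebraMap F K).range)
    (α : K) : ∃ x y : F, α = algebraMap F K x + algebraMap F K y * δ := by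
  obtain ⟨b, hb0, hb1⟩ := exists_basis_one_of_finrank_eq_two h2 hδ
  refine ⟨b.repr α 0, b.repr α 1, ?_⟩
  simpa [Fin.sum_univ_two, hb0, hb1, Algebra.smul_def] using (b.sum_repr α).symm

lemma exists_basis_leftMulMatrix_eq (h2 : Module.finrank F K = 2) {δ : K}
    (hδ : δ ∉ (algebraMap F K).range) {D : F} (hD : δ ^ 2 = algebraMap F K D) (x y : F) :
    ∃ b : Module.Basis (Fin 2) F K,
      Algebra.leftMulMatrix b (algebraMap F K x + algebraMap F K y * δ) = !![x, D * y; y, x] := by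
  obtain ⟨b, hb0, hb1⟩ := exists_basis_one_of_finrank_eq_two h2 hδ
  refine ⟨b, ?_⟩
  have hcol0 : (algebraMap F K x + algebraMap F K y * δ) * b 0 = x • b 0 + y • b 1 := by
    rw [hb0, hb1, Algebra.smul_def, Algebra.smul_def]
    ring
  have hcol1 : (algebraMap F K x + algebraMap F K y * δ) * b 1 = (D * y) • b 0 + x • b 1 := by
    rw [hb0, hb1, Algebra.smul_def, Algebra.smul_def, map_mul]
    linear_combination algebraMap F K y * hD
  ext i j
  rw [Algebra.leftMulMatrix_eq_repr_mul]
  fin_cases j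
  · simp only [Fin.zero_eta, hcol0]
    fin_cases i <;> simp
  · simp only [Fin.mk_one, hcol1]
    fin_cases i <;> simp

lemma trace_add_mul (h2 : Module.finrank F K = 2) {δ : K} (hδ : δ ∉ (algebraMap F K).range) {D : F}
    (hD : δ ^ 2 = algebraMap F K D) (x y : F) :
    Algebra.trace F K (algebraMap F K x + algebraMap F K y * δ) = 2 * x := by
  obtain ⟨b, hb⟩ := exists_basis_leftMulMatrix_eq h2 hδ hD x y
  rw [Algebra.trace_eq_matrix_trace b, hb, Matrix.trace_fin_two_of, two_mul]

lemma norm_add_mul (h2 : Module.finrank F K = 2) {δ : K} (hδ : δ ∉ (algebraMap F K).range) {D : F}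
    (hD : δ ^ 2 = algebraMap F K D) (x y : F) :
    Algebra.norm F (algebraMap F K x + algebraMap F K y * δ) = x ^ 2 - D * y ^ 2 := by
  obtain ⟨b, hb⟩ := exists_basis_leftMulMatrix_eq h2 hδ hD x y
  rw [Algebra.norm_eq_matrix_det b, hb, Matrix.det_fin_two_of]
  ring

end QuadraticExtension

lemma exists_intCast_eq_of_squarefree_mul_sq_eq {m N : ℤ} (hm : Squarefree m) {y : ℚ}
    (h : m * y ^ 2 = N) : ∃ B : ℤ, (B : ℚ) = y := by
  have hpow : ((m : ℚ) * y) ^ 2 = ((m * N : ℤ) : ℚ) := by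
    push_cast
    linear_combination (m : ℚ) * h
  obtain ⟨t, ht⟩ : ∃ t : ℤ, (t : ℚ) = m * y :=
    IsIntegrallyClosed.exists_algebraMap_eq_of_isIntegral_pow two_pos
      (hpow ▸ isIntegral_algebraMap (R := ℤ))
  have hmt : m ∣ t ^ 2 := ⟨N, by exact_mod_cast (ht ▸ hpow : (t : ℚ) ^ 2 = ((m * N : ℤ) : ℚ))⟩
  obtain ⟨B, rfl⟩ := (hm.dvd_pow_iff_dvd two_ne_zero).1 hmt
  refine ⟨B, mul_left_cancel₀ (Int.cast_ne_zero.2 hm.ne_zero) ?_⟩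
  exact_mod_cast ht

variable {K : Type*} [Field K] {m : ℤ}

lemma sqrtd_sq (ψ : ℤ√m →+* 𝓞 K) : (ψ Zsqrtd.sqrtd : K) ^ 2 = m := by
  have h : ψ Zsqrtd.sqrtd ^ 2 = m := by rw [← map_pow, sq, Zsqrtd.dmuld, map_intCast]
  simpa only [map_pow, map_intCast] using congrArg (algebraMap (𝓞 K) K) h

variable [NumberField K]

lemma sqrtd_notMem_range (ψ : ℤ√m →+* 𝓞 K) (hm : ¬IsSquare m) :
    (ψ Zsqrtd.sqrtd : K) ∉ (algebraMap ℚ K).range := by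
  rintro ⟨q, hq⟩
  have hsq := sqrtd_sq ψ
  rw [← hq, ← map_pow, ← map_intCast (algebraMap ℚ K)] at hsq
  exact hm (Rat.isSquare_intCast_iff.1 ⟨q, by rw [← sq, (algebraMap ℚ K).injective hsq]⟩)

lemma exists_two_mul_eq_map (ψ : ℤ√m →+* 𝓞 K) (h2 : Module.finrank ℚ K = 2) (hm : Squarefree m)
    (hm' : ¬IsSquare m) (α : 𝓞 K) : ∃ z : ℤ√m, 2 * α = ψ z ∧ 4 * Algebra.norm ℤ α = z.norm := by
  have hδ := sqrtd_notMem_range ψ hm'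
  have hδ2 : (ψ Zsqrtd.sqrtd : K) ^ 2 = algebraMap ℚ K m := by rw [sqrtd_sq, map_intCast]
  obtain ⟨x, y, hα⟩ := exists_eq_add_mul h2 hδ (α : K)
  have htrace : ((Algebra.trace ℤ (𝓞 K) α : ℤ) : ℚ) = 2 * x := by
    rw [Algebra.coe_trace_int, hα, trace_add_mul h2 hδ hδ2]
  have hnorm : ((Algebra.norm ℤ α : ℤ) : ℚ) = x ^ 2 - m * y ^ 2 := by
    rw [Algebra.coe_norm_int, hα, norm_add_mul h2 hδ hδ2]
  set A := Algebra.trace ℤ (𝓞 K) α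
  obtain ⟨B, hB⟩ := exists_intCast_eq_of_squarefree_mul_sq_eq hm (y := 2 * y)
    (N := A ^ 2 - 4 * Algebra.norm ℤ α) (by
      push_cast
      rw [htrace, hnorm]
      ring)
  refine ⟨⟨A, B⟩, ?_, ?_⟩
  · apply RingOfIntegers.ext
    have hA : (A : K) = 2 * algebraMap ℚ K x := by simpa using congrArg (algebraMap ℚ K) htrace
    have hB : (B : K) = 2 * algebraMap ℚ K y := by simpa using congrArg (algebraMap ℚ K) hB
    rw [zsqrtd_map_eq]
    simp only [RingOfIntegers.coe_eq_algebraMap, map_add, map_mul, map_ofNat, map_intCast] at hα ⊢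
    rw [hA, hB, hα]
    ring
  · rw [Zsqrtd.norm_def]
    have hcast : (4 * Algebra.norm ℤ α : ℚ) = A * A - m * B * B := by
      rw [htrace, hnorm, hB]
      ring
    exact_mod_cast hcast

lemma three_not_dvd_absNorm {a : Ideal (𝓞 K)} (ha : a ⊔ Ideal.span {3} = ⊤) :
    ¬3 ∣ Ideal.absNorm a := by
  intro h
  obtain ⟨P, hP, hP3, hPa⟩ := Ideal.exists_isMaximal_dvd_of_dvd_absNorm' Nat.prime_three _ h
  have h3 : (3 : 𝓞 K) ∈ P := by
    have h : (3 : ℤ) ∈ P.under ℤ := hP3 ▸ Ideal.mem_span_singleton_self _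
    simpa using h
  exact hP.ne_top (top_le_iff.1 (ha ▸ sup_le (Ideal.le_of_dvd hPa)
    ((Ideal.span_singleton_le_iff_mem _).2 h3)))

lemma exists_norm_eq_pow_of_span_singleton_eq_pow {a : Ideal (𝓞 K)} {α : 𝓞 K} {n : ℕ}
    (hn : Odd n) (ha : Ideal.span {α} = a ^ n) :
    ∃ k : ℤ, k.natAbs = Ideal.absNorm a ∧ Algebra.norm ℤ α = k ^ n := by
  have hnorm : (Algebra.norm ℤ α).natAbs = Ideal.absNorm a ^ n := by
    rw [← Ideal.absNorm_span_singleton, ha, map_pow]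
  rcases Int.natAbs_eq (Algebra.norm ℤ α) with h | h
  · exact ⟨Ideal.absNorm a, by simp, by rw [h, hnorm, Nat.cast_pow]⟩
  · exact ⟨-Ideal.absNorm a, by simp, by rw [h, hnorm, Nat.cast_pow, hn.neg_pow]⟩

-- The factor 8 is a cube clearing the denominator 2 of the coordinates of `α`.
lemma exists_mem_cubeNorms_map_eq (ψ : ℤ√m →+* 𝓞 K) (h2 : Module.finrank ℚ K = 2)
    (hm : Squarefree m) (hm' : ¬IsSquare m) {a : Ideal (𝓞 K)} {α : 𝓞 K}
    (hα : Ideal.span {α} = a ^ 3) (ha : a ⊔ Ideal.span {3} = ⊤) :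
    ∃ z ∈ cubeNorms m, ψ z = 8 * α := by
  obtain ⟨z, hz, hnorm⟩ := exists_two_mul_eq_map ψ h2 hm hm' α
  obtain ⟨k, hka, hk⟩ := exists_norm_eq_pow_of_span_singleton_eq_pow ⟨1, rfl⟩ hα
  have h3k : ¬3 ∣ k := fun h => three_not_dvd_absNorm ha (hka ▸ Int.natAbs_dvd_natAbs.2 h)
  refine ⟨4 * z, ⟨4 * k, by omega, ?_⟩, ?_⟩
  · rw [Zsqrtd.norm_mul, ← hnorm, hk]
    have h4 : (4 : ℤ√m).norm = 16 := by simpa using Zsqrtd.norm_natCast (d := m) 4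
    rw [h4]
    ring
  · rw [map_mul, ← hz, map_ofNat]
    ring

end

/-! ### Power residue classes and non-cubes -/

lemma exists_powerClass_of_finite_field (k : Type*) [Field k] [Finite k] {n : ℕ} (hn : n ≠ 0) :
    ∃ f : k → Fin n, ∀ x y, x ≠ 0 → y ≠ 0 → f x = f y → ∃ w, y = x * w ^ n := by
  have hcard : Nat.card (kˣ ⧸ (powMonoidHom n : kˣ →* kˣ).range) ≤ n := by
    rw [← Subgroup.index, IsCyclic.index_powMonoidHom_range]
    exact Nat.gcd_le_right _ (Nat.pos_of_ne_zero hn)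
  let e := (Finite.equivFin _).toEmbedding.trans (Fin.castLEEmb hcard)
  have : NeZero n := ⟨hn⟩
  classical
  refine ⟨fun x => if hx : x = 0 then 0 else e (Units.mk0 x hx), fun x y hx hy hxy => ?_⟩
  simp only [dif_neg hx, dif_neg hy] at hxy
  obtain ⟨w, hw⟩ := QuotientGroup.eq.1 (e.injective hxy)
  refine ⟨w, ?_⟩
  simpa using congrArg Units.val (eq_inv_mul_iff_mul_eq.1 hw).symm

lemma exists_powerClass {R : Type*} [CommRing R] (Q : Ideal R) [Q.IsMaximal] [Finite (R ⧸ Q)]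
    {n : ℕ} (hn : n ≠ 0) :
    ∃ f : R → Fin n, ∀ x y, x ∉ Q → y ∉ Q → f x = f y → ∃ w, y - x * w ^ n ∈ Q := by
  let : Field (R ⧸ Q) := Ideal.Quotient.field Q
  obtain ⟨f, hf⟩ := exists_powerClass_of_finite_field (R ⧸ Q) hn
  refine ⟨fun x => f (Ideal.Quotient.mk Q x), fun x y hx hy hxy => ?_⟩
  obtain ⟨w, hw⟩ := hf _ _ (mt Ideal.Quotient.eq_zero_iff_mem.1 hx)
    (mt Ideal.Quotient.eq_zero_iff_mem.1 hy) hxy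
  obtain ⟨w, rfl⟩ := Ideal.Quotient.mk_surjective w
  exact ⟨w, Ideal.Quotient.eq.1 (by rw [hw, map_mul, map_pow])⟩

lemma exists_cubicResidueClass {L : Type} [Field L] [NumberField L] {Q : Ideal (𝓞 L)}
    (hQ : Q.IsPrime) (hQ0 : Q ≠ ⊥) (h3 : 3 ∉ Q) :
    ∃ f : 𝓞 L → Fin 3, ∀ x y, x ∉ Q → y ∉ Q → f x = f y → IsCubicResidue (x * y ^ 2) Q := by
  have := hQ.isMaximal hQ0
  have := Ideal.finiteQuotientOfFreeOfNeBot Q hQ0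
  obtain ⟨f, hf⟩ := exists_powerClass Q three_ne_zero
  refine ⟨f, fun x y hx hy hxy => ⟨h3, ?_, ?_⟩⟩
  · exact fun h => (hQ.mem_or_mem h).elim hx fun h => hy (hQ.mem_of_pow_mem 2 h)
  · obtain ⟨w, hw⟩ := hf x y hx hy hxy
    refine ⟨x * w ^ 2, ?_⟩
    have hfactor : x * y ^ 2 - (x * w ^ 2) ^ 3 = x * (y + x * w ^ 3) * (y - x * w ^ 3) := by ring
    exact hfactor ▸ Q.mul_mem_left _ hw

section Algebra

variable {A B : Type*} [CommRing A] [CommRing B] [Algebra A B]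

lemma notMem_of_under_sup_span_natCast_eq_top {Q : Ideal B} (hQ : Q ≠ ⊤) {n : ℕ}
    (h : Q.under A ⊔ Ideal.span {(n : A)} = ⊤) : (n : B) ∉ Q := by
  intro hn
  have hle : Ideal.span {(n : A)} ≤ Q.under A :=
    (Ideal.span_singleton_le_iff_mem _).2 (by simpa using hn)
  rw [sup_eq_left.2 hle] at h
  exact hQ (Ideal.comap_eq_top_iff.1 h)

end Algebra

lemma exists_prime_under_eq {F : Type*} (L : Type*) [Field F] [Field L] [NumberField F]
    [Algebra F L] {p : Ideal (𝓞 F)} (hp : p.IsPrime) (hp0 : p ≠ ⊥) :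
    ∃ Q : Ideal (𝓞 L), Q.IsPrime ∧ Q ≠ ⊥ ∧ Q.under (𝓞 F) = p := by
  have := hp.isMaximal hp0
  obtain ⟨Q, hQ, hQp⟩ := Ideal.exists_maximal_ideal_liesOver_of_isIntegral (S := 𝓞 L) p
  exact ⟨Q, hQ.isPrime, Ideal.ne_bot_of_liesOver_of_ne_bot hp0 Q, hQp.over.symm⟩

lemma exists_pow_eq_of_pow_eq_pow {K : Type*} [Field K] {x y : K} {d n : ℕ} (h : d.Coprime n)
    (hx : x ≠ 0) (hxy : x ^ d = y ^ n) : ∃ w, w ^ n = x := by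
  have hbezout : (d : ℤ) * d.gcdA n + n * d.gcdB n = 1 := by
    rw [← Nat.gcd_eq_gcd_ab, h.gcd_eq_one, Nat.cast_one]
  refine ⟨y ^ d.gcdA n * x ^ d.gcdB n, ?_⟩
  calc (y ^ d.gcdA n * x ^ d.gcdB n) ^ n
      = (y ^ n) ^ d.gcdA n * (x ^ n) ^ d.gcdB n := by
        rw [mul_pow, ← zpow_natCast, ← zpow_natCast, ← zpow_natCast, ← zpow_natCast, ← zpow_mul,
          ← zpow_mul, ← zpow_mul, ← zpow_mul, mul_comm (n : ℤ), mul_comm (n : ℤ)]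
    _ = x ^ ((d : ℤ) * d.gcdA n + n * d.gcdB n) := by
        rw [← hxy, zpow_add₀ hx, zpow_mul, zpow_mul, zpow_natCast, zpow_natCast]
    _ = x := by rw [hbezout, zpow_one]

lemma pow_ne_algebraMap_of_mk0_ne_one {K L : Type*} [Field K] [NumberField K] [Field L]
    [Algebra K L] {n : ℕ} (hn : n ≠ 0) (hKL : (Module.finrank K L).Coprime n) {g : 𝓞 K}
    {a : (Ideal (𝓞 K))⁰} (ha : Ideal.span {g} = a.1 ^ n) (hc : ClassGroup.mk0 a ≠ 1) (x : L) :
    x ^ n ≠ algebraMap K L g := by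
  intro hx
  have hg0 : (g : K) ≠ 0 := by
    intro hg
    rw [RingOfIntegers.coe_eq_zero_iff.1 hg, Ideal.span_singleton_eq_bot.2 rfl, eq_comm] at ha
    exact nonZeroDivisors.ne_zero a.2 ((pow_eq_zero_iff hn).1 ha)
  have hnorm : (g : K) ^ Module.finrank K L = Algebra.norm K x ^ n := by
    rw [← Algebra.norm_algebraMap (S := L), ← map_pow, hx]
  obtain ⟨w, hw⟩ := exists_pow_eq_of_pow_eq_pow hKL hg0 hnorm
  obtain ⟨β, hβ⟩ : ∃ β : 𝓞 K, algebraMap (𝓞 K) K β = w :=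
    ⟨⟨w, .of_pow (Nat.pos_of_ne_zero hn) (hw ▸ g.2)⟩, rfl⟩
  have hβg : β ^ n = g := RingOfIntegers.ext (by
    rw [RingOfIntegers.coe_eq_algebraMap, map_pow, hβ, hw])
  rw [← hβg, ← Ideal.span_singleton_pow] at ha
  exact hc ((ClassGroup.mk0_eq_one_iff a.2).2 ⟨β, (ideal_eq_of_pow_eq_pow hn ha).symm⟩)

/-! ### The reflection inequality -/

section

variable {m : ℤ}

lemma isCoprime_three_of_mem_cubeNorms {z : ℤ√m} (hz : z ∈ cubeNorms m) : IsCoprime z 3 := by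
  obtain ⟨k, hk, hnorm⟩ := hz
  have hcoprime : IsCoprime (k ^ 3) 3 := (Int.prime_three.coprime_iff_not_dvd.2 hk).symm.pow_left
  have h := hcoprime.map (Int.castRingHom (ℤ√m))
  rw [← hnorm, eq_intCast, eq_intCast, Zsqrtd.norm_eq_mul_conj] at h
  exact_mod_cast h.of_mul_left_left

lemma exists_eq_add_mul_of_mem_cubeNorms {F L : Type*} [Field F] [CharZero F] [Field L]
    [Algebra F L] {z : ℤ√m} (hz : z ∈ cubeNorms m) (φ : ℤ√m →+* L) {s : L} (hs : s ^ 2 = -3)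
    {c₀ : F} (hc₀ : φ Zsqrtd.sqrtd = algebraMap F L c₀ * s) :
    ∃ A C n : F, φ z = algebraMap F L A + algebraMap F L C * s ∧ A ^ 2 + 3 * C ^ 2 = n ^ 3 ∧
      n ≠ 0 := by
  obtain ⟨k, hk, hnorm⟩ := hz
  have hm : (m : F) = -3 * c₀ ^ 2 := by
    apply (algebraMap F L).injective
    have hsq := congrArg φ (Zsqrtd.dmuld (d := m))
    rw [map_mul, map_intCast, hc₀] at hsq
    simp only [map_intCast, map_mul, map_neg, map_ofNat, map_pow]
    linear_combination -hsq + algebraMap F L c₀ ^ 2 * hs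
  refine ⟨z.re, z.im * c₀, k, ?_, ?_, ?_⟩
  · rw [zsqrtd_map_eq, hc₀, map_mul, map_intCast, map_intCast, mul_assoc]
  · have hnorm : (z.re : F) * z.re - m * z.im * z.im = k ^ 3 := by exact_mod_cast hnorm
    linear_combination hnorm + (z.im : F) ^ 2 * hm
  · rw [Int.cast_ne_zero]
    rintro rfl
    exact hk (dvd_zero 3)

/-- `ψ z` generates the cube of an ideal in the class `c`, and `z` has a norm to which the invariant
`cubicInvariant` applies. -/
structure IsCubeGenerator {R : Type*} [CommRing R] [IsDedekindDomain R] (ψ : ℤ√m →+* R)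
    (c : ClassGroup R) (z : ℤ√m) : Prop where
  mem_cubeNorms : z ∈ cubeNorms m
  exists_span_eq_pow : ∃ a : (Ideal R)⁰, ClassGroup.mk0 a = c ∧ Ideal.span {ψ z} = a.1 ^ 3

lemma IsCubeGenerator.mul_sq {R : Type*} [CommRing R] [IsDedekindDomain R] {ψ : ℤ√m →+* R}
    {c c' : ClassGroup R} {z z' : ℤ√m} (h : IsCubeGenerator ψ c z)
    (h' : IsCubeGenerator ψ c' z') : IsCubeGenerator ψ (c * c' ^ 2) (z * z' ^ 2) := by
  obtain ⟨hz, a, rfl, ha⟩ := h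
  obtain ⟨hz', a', rfl, ha'⟩ := h'
  refine ⟨mul_mem hz (pow_mem hz' 2), a * a' ^ 2, by rw [map_mul, map_pow], ?_⟩
  rw [map_mul, map_pow, ← Ideal.span_singleton_mul_span_singleton, ← Ideal.span_singleton_pow, ha,
    ha', Submonoid.coe_mul, SubmonoidClass.coe_pow]
  ring

lemma notMem_of_span_singleton_eq_pow {R : Type*} [CommRing R] {a P : Ideal R} {α : R} {n : ℕ}
    (hα : Ideal.span {α} = a ^ n) (hP : P ≠ ⊤) (h : a ⊔ P = ⊤) : α ∉ P := by
  intro hαP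
  have hsup : a ^ n ⊔ P = ⊤ := Ideal.pow_sup_eq_top h
  rw [← hα, sup_eq_right.2 ((Ideal.span_singleton_le_iff_mem _).2 hαP)] at hsup
  exact hP hsup

variable {K : Type*} [Field K] [NumberField K] {ψ : ℤ√m →+* 𝓞 K}

lemma exists_isCubeGenerator (h2 : Module.finrank ℚ K = 2) (hm : Squarefree m)
    (hm' : ¬IsSquare m) {c : ClassGroup (𝓞 K)} (hc : c ^ 3 = 1) {J : Ideal (𝓞 K)} (hJ : J ≠ ⊥) :
    ∃ z, IsCubeGenerator ψ c z ∧ ∀ P : Ideal (𝓞 K), P.IsPrime → J ≤ P → 2 ∉ P → ψ z ∉ P := by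
  obtain ⟨a, α, hac, haJ, hα⟩ := exists_span_singleton_eq_pow hc
    (mul_ne_zero (a := Ideal.span {3}) (by simp) hJ)
  have ha3 : a.1 ⊔ Ideal.span {3} = ⊤ := top_le_iff.1 (haJ ▸ sup_le_sup_left Ideal.mul_le_left _)
  obtain ⟨z, hz, hzα⟩ := exists_mem_cubeNorms_map_eq ψ h2 hm hm' hα ha3
  have h2K : Ideal.span {(2 : 𝓞 K)} ∈ (Ideal (𝓞 K))⁰ := mem_nonZeroDivisors_of_ne_zero (by simp)
  refine ⟨z, ⟨hz, ⟨_, h2K⟩ * a, ?_, ?_⟩, fun P hP hJP h2P => ?_⟩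
  · rw [map_mul, (ClassGroup.mk0_eq_one_iff h2K).2 ⟨2, rfl⟩, one_mul, hac]
  · rw [hzα, Submonoid.coe_mul, mul_pow, ← hα, Ideal.span_singleton_pow,
      Ideal.span_singleton_mul_span_singleton]
    norm_num
  · have h8 : (8 : 𝓞 K) = 2 ^ 3 := by norm_num
    rw [hzα, h8]
    have haP : a.1 ⊔ P = ⊤ :=
      top_le_iff.1 (haJ ▸ sup_le_sup_left (Ideal.mul_le_right.trans hJP) _)
    exact fun h => (hP.mem_or_mem h).elim (fun h => h2P (hP.mem_of_pow_mem 3 h))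
      (notMem_of_span_singleton_eq_pow hα hP.ne_top haP)

variable {L : Type} [Field L] [NumberField L] [Algebra K L]

lemma zeta_sub_sq_sq {R : Type*} [CommRing R] [IsDomain R] {ζ : R} (hζ : IsPrimitiveRoot ζ 3) :
    (ζ - ζ ^ 2) ^ 2 = -3 := by
  linear_combination (ζ ^ 2 - 3 * ζ + 3) * sq_add_self_add_one_eq_zero hζ

lemma IsCubeGenerator.isSingularPrimary {c : ClassGroup (𝓞 K)} {z : ℤ√m}
    (h : IsCubeGenerator ψ c z) (hm : ¬9 ∣ m) (hinv : cubicInvariant z = 0) {ζ : 𝓞 L}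
    (hζ : IsPrimitiveRoot ζ 3) : IsSingularPrimary ζ (algebraMap (𝓞 K) (𝓞 L) (ψ z)) := by
  obtain ⟨hz, a, -, ha⟩ := h
  refine ⟨?_, ⟨a.1.map (algebraMap (𝓞 K) (𝓞 L)), ?_⟩, ?_, ?_⟩
  · rw [Ne, FaithfulSMul.algebraMap_eq_zero_iff, ← Ideal.span_singleton_eq_bot, ha]
    exact pow_ne_zero 3 (nonZeroDivisors.ne_zero a.2)
  · rw [← Ideal.map_pow, ← ha, Ideal.map_span, Set.image_singleton]
  · have h := (isCoprime_three_of_mem_cubeNorms hz).map ((algebraMap (𝓞 K) (𝓞 L)).comp ψ)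
    rwa [map_ofNat] at h
  · exact ⟨_, three_mul_dvd_sub_pow_of_cubicInvariant_eq_zero ((algebraMap (𝓞 K) (𝓞 L)).comp ψ)
      (zeta_sub_sq_sq hζ) hm hz hinv⟩

lemma exists_isCubeGenerator_ne_one {ι : Type*} [Fintype ι] (h2 : Module.finrank ℚ K = 2)
    (hm : Squarefree m) (hm' : ¬IsSquare m) {Q : ι → Ideal (𝓞 L)} (hQ : ∀ i, (Q i).IsPrime)
    (hQ0 : ∀ i, Q i ≠ ⊥) (hQ2 : ∀ i, 2 ∉ Q i) (hQ3 : ∀ i, 3 ∉ Q i)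
    (hcard : 3 ^ Fintype.card ι * 3 < clTor K 3) :
    ∃ (c : ClassGroup (𝓞 K)) (z : ℤ√m), c ≠ 1 ∧ IsCubeGenerator ψ c z ∧ cubicInvariant z = 0 ∧
      ∀ i, IsCubicResidue (algebraMap (𝓞 K) (𝓞 L) (ψ z)) (Q i) := by
  classical
  choose f hf using fun i => exists_cubicResidueClass (hQ i) (hQ0 i) (hQ3 i)
  have hJ : ∏ i, (Q i).under (𝓞 K) ≠ ⊥ :=
    Finset.prod_ne_zero_iff.2 fun i _ => Ideal.under_ne_bot (𝓞 K) (hQ0 i)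
  choose z hz hzP using fun c : {c : ClassGroup (𝓞 K) // c ^ 3 = 1} =>
    exists_isCubeGenerator (ψ := ψ) h2 hm hm' c.2 hJ
  have hzQ c i : algebraMap (𝓞 K) (𝓞 L) (ψ (z c)) ∉ Q i :=
    hzP c _ (Ideal.IsPrime.under _ (Q i))
      (Ideal.le_of_dvd (Finset.dvd_prod_of_mem _ (Finset.mem_univ i)))
      (by rw [Ideal.mem_comap, map_ofNat]; exact hQ2 i)
  have := Fintype.ofFinite {c : ClassGroup (𝓞 K) // c ^ 3 = 1}
  obtain ⟨c, c', hne, heq⟩ := Fintype.exists_ne_map_eq_of_card_lt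
    (β := (ι → Fin 3) × ZMod 3)
    (fun c => (fun i => f i (algebraMap (𝓞 K) (𝓞 L) (ψ (z c))), cubicInvariant (z c))) (by
      rw [Fintype.card_prod, Fintype.card_fun, Fintype.card_fin, ZMod.card,
        ← Nat.card_eq_fintype_card (α := {c : ClassGroup (𝓞 K) // c ^ 3 = 1})]
      exact hcard)
  obtain ⟨hclass, hinv⟩ := Prod.ext_iff.1 heq
  refine ⟨c * c' ^ 2, z c * z c' ^ 2, ?_, (hz c).mul_sq (hz c'), ?_, fun i => ?_⟩
  · intro h
    refine hne (Subtype.ext (mul_right_cancel (b := (c' : ClassGroup (𝓞 K)) ^ 2) ?_))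
    rw [h, ← pow_succ', c'.2]
  · have hmem := (hz c').mem_cubeNorms
    dsimp only at hinv
    rw [sq, cubicInvariant_mul (hz c).mem_cubeNorms (mul_mem hmem hmem),
      cubicInvariant_mul hmem hmem, hinv]
    generalize cubicInvariant (z c') = v
    decide +revert
  · rw [map_mul, map_pow, map_mul, map_pow]
    exact hf i _ _ (hzQ c i) (hzQ c' i) (congrFun hclass i)

lemma exists_finset_primes_generatesModCubes (F L : Type*) [Field F] [NumberField F] [Field L]
    [Algebra F L] :
    ∃ (T : Finset (Ideal (𝓞 F))⁰) (Q : T → Ideal (𝓞 L)),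
      GeneratesModCubes (T : Set (Ideal (𝓞 F))⁰) ∧ 3 ^ T.card ≤ clTor F 3 ∧
      ∀ p : T, (Q p).IsPrime ∧ Q p ≠ ⊥ ∧ (Q p).under (𝓞 F) = p.1.1 ∧ 2 ∉ Q p ∧ 3 ∉ Q p := by
  have h6 : Ideal.span {((6 : ℕ) : 𝓞 F)} ≠ ⊥ := by simp
  obtain ⟨T, hT, hgen, hcard⟩ := exists_finset_isPrime_generatesModCubes h6
  choose Q hQ hQ0 hunder using fun p : T =>
    exists_prime_under_eq L (hT p p.2).1 (nonZeroDivisors.ne_zero p.1.2)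
  have hQ6 p : (6 : 𝓞 L) ∉ Q p := notMem_of_under_sup_span_natCast_eq_top (hQ p).ne_top
    (by rw [hunder, (hT p p.2).2])
  have h23 : (6 : 𝓞 L) = 2 * 3 := by norm_num
  exact ⟨T, Q, hgen, hcard, fun p => ⟨hQ p, hQ0 p, hunder p,
    fun h => hQ6 p (h23 ▸ (Q p).mul_mem_right _ h), fun h => hQ6 p (h23 ▸ (Q p).mul_mem_left _ h)⟩⟩

variable {F : Type} [Field F] [NumberField F] [Algebra F L]

theorem clTor_le_three_mul_clTor (hFL : Module.finrank F L = 2) (hKL : Module.finrank K L = 2)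
    (h2 : Module.finrank ℚ K = 2) (hm : Squarefree m) (hm' : ¬IsSquare m) {ζ : 𝓞 L}
    (hζ : IsPrimitiveRoot ζ 3) (hL : IntermediateField.adjoin F {(ζ : L)} = ⊤) {c₀ : F}
    (hc₀ : algebraMap K L (ψ Zsqrtd.sqrtd) = algebraMap F L c₀ * (ζ - (ζ : L) ^ 2)) :
    clTor K 3 ≤ 3 * clTor F 3 := by
  by_contra! hlt
  obtain ⟨T, Q, hgen, hcard, hQ⟩ := exists_finset_primes_generatesModCubes F L
  obtain ⟨c, z, hc, hz, hinv, hres⟩ := exists_isCubeGenerator_ne_one (ψ := ψ) h2 hm hm'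
    (fun p => (hQ p).1) (fun p => (hQ p).2.1) (fun p => (hQ p).2.2.2.1) (fun p => (hQ p).2.2.2.2)
    (by rw [Fintype.card_coe]; omega)
  have hζL : IsPrimitiveRoot (ζ : L) 3 :=
    hζ.map_of_injective (FaithfulSMul.algebraMap_injective (𝓞 L) L)
  obtain ⟨A, C, n, hγ, hn, hn0⟩ := exists_eq_add_mul_of_mem_cubeNorms hz.mem_cubeNorms
    ((algebraMap K L).comp ((algebraMap (𝓞 K) K).comp ψ)) (zeta_sub_sq_sq hζL) hc₀
  have h9 : ¬9 ∣ m := fun h => Int.prime_three.not_isUnit (hm 3 h)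
  obtain ⟨a, rfl, ha⟩ := hz.exists_span_eq_pow
  refine (hz.isSingularPrimary h9 hinv hζ).not_generatesModCubes hFL hζ hL hγ hn hn0
    (pow_ne_algebraMap_of_mk0_ne_one three_ne_zero (by rw [hKL]; norm_num) ha hc)
    (fun p hp => ?_) (fun p hp => ?_) hgen
  · have := (hQ ⟨p, hp⟩).1
    exact (hQ ⟨p, hp⟩).2.2.1 ▸ Ideal.IsPrime.under (𝓞 F) (Q ⟨p, hp⟩)
  · exact ⟨Q ⟨p, hp⟩, (hQ _).1, (hQ _).2.1, (hQ _).2.2.1, hres _⟩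

end

/-! ### Quadratic fields with compositum containing a cube root of unity -/

section Compositum

variable {k Ω : Type*} [Field k] [Field Ω] [Algebra k Ω] {F K : IntermediateField k Ω}

lemma inf_eq_bot_of_finrank_prime {p : ℕ} (hp : p.Prime) (hF : Module.finrank k F = p)
    (hK : Module.finrank k K = p) (hFK : F ≠ K) : F ⊓ K = ⊥ := by
  have : FiniteDimensional k F := Module.finite_of_finrank_pos (hF ▸ hp.pos)
  have : FiniteDimensional k K := Module.finite_of_finrank_pos (hK ▸ hp.pos)
  have hdvd : Module.finrank k ↥(F ⊓ K) ∣ p := hF ▸ finrank_dvd_of_le_right inf_le_left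
  rcases (Nat.dvd_prime hp).1 hdvd with h | h
  · exact finrank_eq_one_iff.1 h
  · have hinfF : F ⊓ K = F := eq_of_le_of_finrank_eq inf_le_left (h.trans hF.symm)
    have hinfK : F ⊓ K = K := eq_of_le_of_finrank_eq inf_le_right (h.trans hK.symm)
    exact absurd (hinfF.symm.trans hinfK) hFK

lemma finrank_sup_eq_four [CharZero k] (hF : Module.finrank k F = 2) (hK : Module.finrank k K = 2)
    (hFK : F ≠ K) : Module.finrank k ↥(F ⊔ K) = 4 := by
  have : FiniteDimensional k F := Module.finite_of_finrank_pos (by omega)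
  have : FiniteDimensional k K := Module.finite_of_finrank_pos (by omega)
  have : Algebra.IsQuadraticExtension k F := ⟨hF⟩
  have hdisjoint : F.LinearDisjoint K :=
    .of_inf_eq_bot (inf_eq_bot_of_finrank_prime Nat.prime_two hF hK hFK)
  rw [hdisjoint.finrank_sup, hF, hK]

lemma finrank_eq_two_of_finrank_eq_four {F L : Type*} [Field F] [Field L] [Algebra k F]
    [Algebra F L] [Algebra k L] [IsScalarTower k F L] (hF : Module.finrank k F = 2)
    (hL : Module.finrank k L = 4) : Module.finrank F L = 2 := by
  have htower := Module.finrank_mul_finrank k F L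
  rw [hF, hL] at htower
  omega

lemma adjoin_simple_eq_top_of_finrank_prime {E : Type*} [Field E] [Algebra k E]
    (h : (Module.finrank k E).Prime) {z : E} (hz : z ∉ (algebraMap k E).range) :
    IntermediateField.adjoin k {z} = ⊤ := by
  have := isSimpleOrder_of_finrank_prime k E h
  exact (eq_bot_or_eq_top _).resolve_left fun hbot =>
    hz (mem_bot.1 (adjoin_simple_eq_bot_iff.1 hbot))

end Compositum

lemma isPrimitiveRoot_three_of_sq_eq {L : Type*} [Field L] [CharZero L] {s : L} (hs : s ^ 2 = -3) :
    IsPrimitiveRoot ((s - 1) / 2) 3 := by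
  have hζ : ((s - 1) / 2) ^ 2 + (s - 1) / 2 + 1 = 0 := by linear_combination (1 / 4 : L) * hs
  have h3 : ((s - 1) / 2) ^ 3 = 1 := by linear_combination ((s - 1) / 2 - 1) * hζ
  refine IsPrimitiveRoot.iff_orderOf.2 (orderOf_eq_prime h3 fun h1 => ?_)
  rw [h1] at hζ
  norm_num at hζ

lemma exists_map_sqrtd_eq {K : Type*} [Field K] {m : ℤ} {y : K} (hy : y ^ 2 = m) :
    ∃ ψ : ℤ√m →+* 𝓞 K, (ψ Zsqrtd.sqrtd : K) = y := by
  obtain ⟨δ, rfl⟩ : ∃ δ : 𝓞 K, algebraMap (𝓞 K) K δ = y :=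
    ⟨⟨y, .of_pow two_pos (hy ▸ isIntegral_algebraMap (R := ℤ) (x := m))⟩, rfl⟩
  have hδ : δ * δ = m := FaithfulSMul.algebraMap_injective (𝓞 K) K (by
    rw [map_mul, map_intCast, ← hy, sq])
  exact ⟨Zsqrtd.lift ⟨δ, hδ⟩, by simp [Zsqrtd.lift]⟩

theorem clTor_le_three_mul_clTor_of_notMem_range {F L : Type} {K : Type*} [Field F] [Field K]
    [Field L] [NumberField F] [NumberField K] [NumberField L] [Algebra F L] [Algebra K L]
    (hFL : Module.finrank F L = 2) (hKL : Module.finrank K L = 2) (hK : Module.finrank ℚ K = 2)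
    {m : ℤ} (hm : Squarefree m) (hm' : ¬IsSquare m) {y : K} (hy : y ^ 2 = m) {s : L}
    (hs : s ^ 2 = -3) (hsF : s ∉ (algebraMap F L).range) {c₀ : F}
    (hc₀ : algebraMap K L y = algebraMap F L c₀ * s) : clTor K 3 ≤ 3 * clTor F 3 := by
  have hζ := isPrimitiveRoot_three_of_sq_eq hs
  have hζs : (s - 1) / 2 - ((s - 1) / 2) ^ 2 = s := by linear_combination (-1 / 4 : L) * hs
  obtain ⟨ζ, hζL⟩ : ∃ ζ : 𝓞 L, (ζ : L) = (s - 1) / 2 := ⟨⟨_, hζ.isIntegral three_pos⟩, rfl⟩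
  rw [← hζL] at hζ hζs
  obtain ⟨ψ, rfl⟩ := exists_map_sqrtd_eq hy
  refine clTor_le_three_mul_clTor hFL hKL hK hm hm'
    (hζ.of_map_of_injective (FaithfulSMul.algebraMap_injective (𝓞 L) L)) ?_ (hζs.symm ▸ hc₀)
  refine adjoin_simple_eq_top_of_finrank_prime (hFL ▸ Nat.prime_two) ?_
  rintro ⟨t, ht⟩
  refine hsF ⟨2 * t + 1, ?_⟩
  rw [map_add, map_mul, ht, hζL, map_ofNat, map_one]
  ring

lemma exists_eq_sq_mul_squarefree (n : ℤ) : ∃ t m : ℤ, n = t ^ 2 * m ∧ Squarefree m := by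
  obtain ⟨a, b, hab, ha⟩ := Nat.sq_mul_squarefree n.natAbs
  rcases n.natAbs_eq with h | h <;> rw [← hab] at h
  · exact ⟨b, a, by rw [h]; push_cast; ring, Int.squarefree_natCast.2 ha⟩
  · exact ⟨b, -a, by rw [h]; push_cast; ring, Int.squarefree_natAbs.1 (by simpa using ha)⟩

section Ambient

variable {Ω : Type} [Field Ω] [CharZero Ω] {F K : IntermediateField ℚ Ω} {m : ℤ} {x y s : Ω} {r : ℚ}

lemma sqrt_notMem_of_mul_eq (hFK : F ⊓ K = ⊥) (hm : ¬IsSquare m) (hx : x ∈ F) (hx0 : x ≠ 0)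
    (hy : y ∈ K) (hy2 : y ^ 2 = m) (hxy : x * y = r * s) : s ∉ F := by
  intro hs
  have hyF : y ∈ F := by
    rw [eq_div_of_mul_eq hx0 ((mul_comm y x).trans hxy)]
    exact F.div_mem (F.mul_mem (SubfieldClass.ratCast_mem F r) hs) hx
  obtain ⟨q, rfl⟩ := mem_bot.1 (hFK ▸ mem_inf.2 ⟨hyF, hy⟩)
  rw [← map_pow, ← map_intCast (algebraMap ℚ Ω)] at hy2
  exact hm (Rat.isSquare_intCast_iff.1 ⟨q, by rw [← sq, (algebraMap ℚ Ω).injective hy2]⟩)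

theorem clTor_le_three_mul_clTor_of_squarefree_of_mul_eq (hF : Module.finrank ℚ F = 2)
    (hK : Module.finrank ℚ K = 2) (hFK : F ≠ K) (hm : Squarefree m) (hm' : ¬IsSquare m)
    (hx : x ∈ F) (hy : y ∈ K) (hy2 : y ^ 2 = m) (hs : s ^ 2 = -3) (hr : r ≠ 0)
    (hxy : x * y = r * s) : clTor K 3 ≤ 3 * clTor F 3 := by
  have : FiniteDimensional ℚ F := Module.finite_of_finrank_pos (by omega)
  have : FiniteDimensional ℚ K := Module.finite_of_finrank_pos (by omega)
  have : NumberField F := ⟨⟩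
  have : NumberField K := ⟨⟩
  have : NumberField ↥(F ⊔ K) := ⟨⟩
  let : Algebra F ↥(F ⊔ K) := (inclusion le_sup_left).toAlgebra
  let : Algebra K ↥(F ⊔ K) := (inclusion le_sup_right).toAlgebra
  have hL := finrank_sup_eq_four hF hK hFK
  have hFL := finrank_eq_two_of_finrank_eq_four (F := F) hF hL
  have hKL := finrank_eq_two_of_finrank_eq_four (F := K) hK hL
  have hr0 : (r : Ω) ≠ 0 := Rat.cast_ne_zero.2 hr
  have hs0 : s ≠ 0 := by rintro rfl; norm_num at hs
  have hx0 : x ≠ 0 := left_ne_zero_of_mul (hxy ▸ mul_ne_zero hr0 hs0)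
  have hsF : s ∉ F := sqrt_notMem_of_mul_eq
    (inf_eq_bot_of_finrank_prime Nat.prime_two hF hK hFK) hm' hx hx0 hy hy2 hxy
  have hsL : s ∈ F ⊔ K := by
    rw [eq_div_of_mul_eq hr0 ((mul_comm s _).trans hxy.symm)]
    exact div_mem (mul_mem (le_sup_left (a := F) hx) (le_sup_right (b := K) hy))
      (SubfieldClass.ratCast_mem _ r)
  refine clTor_le_three_mul_clTor_of_notMem_range (F := F) (L := ↥(F ⊔ K)) (s := ⟨s, hsL⟩)
    (y := ⟨y, hy⟩) (c₀ := r / ⟨x, hx⟩) hFL hKL hK hm hm' (Subtype.ext ?_)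
    (Subtype.ext hs) ?_ (Subtype.ext ?_)
  · simpa using hy2
  · rintro ⟨t, ht⟩
    have hts : (t : Ω) = s := congrArg Subtype.val ht
    exact hsF (hts ▸ t.2)
  · change y = r / x * s
    rw [div_mul_eq_mul_div, ← hxy, mul_div_cancel_left₀ y hx0]

theorem clTor_le_three_mul_clTor_of_mul_eq (hF : Module.finrank ℚ F = 2)
    (hK : Module.finrank ℚ K = 2) (hFK : F ≠ K) (hm : ¬IsSquare m) (hx : x ∈ F) (hy : y ∈ K)
    (hy2 : y ^ 2 = m) (hs : s ^ 2 = -3) (hr : r ≠ 0) (hxy : x * y = r * s) :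
    clTor K 3 ≤ 3 * clTor F 3 := by
  obtain ⟨t, n, rfl, hn⟩ := exists_eq_sq_mul_squarefree m
  have ht : t ≠ 0 := by rintro rfl; simp at hm
  have htΩ : (t : Ω) ≠ 0 := Int.cast_ne_zero.2 ht
  refine clTor_le_three_mul_clTor_of_squarefree_of_mul_eq (y := y / t) (r := r / t) hF hK hFK hn
    (fun h => hm ((IsSquare.sq t).mul h)) hx (div_mem hy (intCast_mem K t)) ?_ hs
    (div_ne_zero hr (Int.cast_ne_zero.2 ht)) ?_
  · rw [div_pow, hy2]
    push_cast
    exact mul_div_cancel_left₀ _ (pow_ne_zero 2 htΩ)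
  · push_cast
    rw [← mul_div_assoc, hxy, mul_div_right_comm]

end Ambient

/-! ### The fields `ℚ(√-d)` and `ℚ(√3d)` -/

lemma clTor_eq_one_of_isPrincipalIdealRing {K : Type*} [Field K] (ℓ : ℕ)
    [IsPrincipalIdealRing (𝓞 K)] : clTor K ℓ = 1 :=
  Nat.card_eq_one_iff_unique.2 ⟨inferInstance, ⟨1, one_pow ℓ⟩⟩

lemma finrank_adjoin_simple_eq_of_pow_eq {k E : Type*} [Field k] [Field E] [Algebra k E] {p : ℕ}
    (hp : p.Prime) {a : k} (ha : ∀ b, b ^ p ≠ a) {x : E} (hx : x ^ p = algebraMap k E a) :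
    Module.finrank k k⟮x⟯ = p := by
  have hmonic := Polynomial.monic_X_pow_sub_C a hp.ne_zero
  have hroot : Polynomial.aeval x (Polynomial.X ^ p - Polynomial.C a) = 0 := by simp [hx]
  rw [adjoin.finrank ⟨_, hmonic, hroot⟩, ← minpoly.eq_of_irreducible_of_monic
    (X_pow_sub_C_irreducible_of_prime hp ha) hroot hmonic, Polynomial.natDegree_X_pow_sub_C]

lemma finrank_adjoin_sqrt_eq_two {E : Type*} [Field E] [CharZero E] {m : ℤ} (hm : ¬IsSquare m)
    {x : E} (hx : x ^ 2 = m) : Module.finrank ℚ ℚ⟮x⟯ = 2 :=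
  finrank_adjoin_simple_eq_of_pow_eq (a := (m : ℚ)) Nat.prime_two
    (fun b hb => hm (Rat.isSquare_intCast_iff.1 ⟨b, by rw [← hb, sq]⟩)) (by simpa using hx)

lemma not_isSquare_neg_natCast {d : ℕ} (hd : d ≠ 0) : ¬IsSquare (-d : ℤ) := fun h => by
  have := h.nonneg
  omega

lemma not_isSquare_three_mul {d : ℕ} (hd : Squarefree d) (h3 : d ≠ 3) :
    ¬IsSquare (3 * d : ℤ) := by
  rintro ⟨k, hk⟩
  obtain ⟨j, rfl⟩ : 3 ∣ k := Int.prime_three.dvd_of_dvd_pow (n := 2) ⟨d, by rw [sq, hk]⟩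
  have hdj : (d : ℤ) = 3 * (j * j) := by linarith
  have hj : IsUnit (j * j) :=
    have := Int.squarefree_natCast.2 hd j (hdj ▸ dvd_mul_left _ _)
    this.mul this
  rcases Int.isUnit_iff.1 hj with h | h <;> omega

lemma I_mul_sqrt_sq (d : ℕ) : (Complex.I * (√d : ℝ)) ^ 2 = ((-d : ℤ) : ℂ) := by
  rw [mul_pow, Complex.I_sq, ← Complex.ofReal_pow, Real.sq_sqrt d.cast_nonneg]
  simp

lemma sqrt_three_mul_sq (d : ℕ) : ((√(3 * d) : ℝ) : ℂ) ^ 2 = ((3 * d : ℤ) : ℂ) := by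
  rw [← Complex.ofReal_pow, Real.sq_sqrt (by positivity)]
  simp

lemma I_mul_sqrt_mul_sqrt_three_mul (d : ℕ) :
    (Complex.I * (√d : ℝ)) * (√(3 * d) : ℝ) = (d : ℚ) * (Complex.I * (√(3 : ℕ) : ℝ)) := by
  have hd : ((√d : ℝ) : ℂ) * (√d : ℝ) = d := by
    rw [← Complex.ofReal_mul, Real.mul_self_sqrt d.cast_nonneg, Complex.ofReal_natCast]
  rw [Real.sqrt_mul zero_le_three, Nat.cast_ofNat, Complex.ofReal_mul, Rat.cast_natCast]
  linear_combination Complex.I * (√3 : ℝ) * hd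

lemma im_eq_zero_of_mem_Qpos3 {d : ℕ} {z : ℂ} (hz : z ∈ Qpos3 d) : z.im = 0 := by
  have hle : Qpos3 d ≤ (Complex.ofRealAm.restrictScalars ℚ).fieldRange :=
    adjoin_simple_le_iff.2 ⟨√(3 * d), rfl⟩
  obtain ⟨t, rfl⟩ := hle hz
  exact Complex.ofReal_im t

lemma Qneg_ne_Qpos3 {d : ℕ} (hd : d ≠ 0) : Qneg d ≠ Qpos3 d := by
  intro h
  have hmem : Complex.I * (√d : ℝ) ∈ Qneg d := mem_adjoin_simple_self ℚ _
  have him := im_eq_zero_of_mem_Qpos3 (h ▸ hmem)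
  rw [Complex.I_mul_im, Complex.ofReal_re, Real.sqrt_eq_zero d.cast_nonneg] at him
  exact hd (Nat.cast_eq_zero.1 him)

lemma clTor_Qneg_three (ℓ : ℕ) : clTor (Qneg 3) ℓ = 1 := by
  set s : ℂ := Complex.I * (√(3 : ℕ) : ℝ) with hs
  have hζ : IsPrimitiveRoot ((s - 1) / 2) 3 := isPrimitiveRoot_three_of_sq_eq (by
    rw [hs, I_mul_sqrt_sq]
    norm_num)
  have hadjoin : Qneg 3 = ℚ⟮(s - 1) / 2⟯ := by
    refine le_antisymm (adjoin_simple_le_iff.2 ?_) (adjoin_simple_le_iff.2 ?_)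
    · have hsmem := add_mem (mul_mem (ofNat_mem _ 2) (mem_adjoin_simple_self ℚ ((s - 1) / 2)))
        (one_mem ℚ⟮(s - 1) / 2⟯)
      rwa [mul_div_cancel₀ _ two_ne_zero, sub_add_cancel] at hsmem
    · have hsmem : s ∈ Qneg 3 := mem_adjoin_simple_self ℚ s
      exact div_mem (sub_mem hsmem (one_mem _)) (ofNat_mem _ 2)
  rw [hadjoin]
  have : IsCyclotomicExtension {3} ℚ ℚ⟮(s - 1) / 2⟯ := by
    change IsCyclotomicExtension {3} ℚ ℚ⟮(s - 1) / 2⟯.toSubalgebra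
    rw [adjoin_simple_toSubalgebra_of_isAlgebraic
      ((hζ.isIntegral three_pos).tower_top (A := ℚ)).isAlgebraic]
    exact hζ.adjoin_isCyclotomicExtension ℚ
  have := IsCyclotomicExtension.numberField {3} ℚ ℚ⟮(s - 1) / 2⟯
  have := IsCyclotomicExtension.Rat.three_pid ℚ⟮(s - 1) / 2⟯
  exact clTor_eq_one_of_isPrincipalIdealRing ℓ

lemma clTor_Qpos3_three (ℓ : ℕ) : clTor (Qpos3 3) ℓ = 1 := by
  have hsqrt : √(3 * (3 : ℕ)) = 3 := by
    rw [Nat.cast_ofNat, Real.sqrt_mul_self zero_le_three]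
  have hbot : Qpos3 3 = ⊥ := by
    rw [Qpos3, hsqrt, adjoin_simple_eq_bot_iff]
    exact ofNat_mem _ 3
  rw [hbot]
  let e : ℤ ≃+* 𝓞 (⊥ : IntermediateField ℚ ℂ) := Rat.ringOfIntegersEquiv.symm.trans
    (RingOfIntegers.mapRingEquiv (botEquiv ℚ ℂ).symm.toRingEquiv)
  have := IsPrincipalIdealRing.of_surjective e e.surjective
  exact clTor_eq_one_of_isPrincipalIdealRing ℓ

end Scholz

/-- **Scholz reflection principle.** For every squarefree integer `d > 1`,
`|Cl_{ℚ(√-d)}[3]| ≤ 3 · |Cl_{ℚ(√3d)}[3]|` and `|Cl_{ℚ(√3d)}[3]| ≤ 3 · |Cl_{ℚ(√-d)}[3]|`. -/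
theorem scholz_reflection (d : ℕ) (hd : 1 < d) (hsq : Squarefree d) :
    clTor (Qneg d) 3 ≤ 3 * clTor (Qpos3 d) 3 ∧
      clTor (Qpos3 d) 3 ≤ 3 * clTor (Qneg d) 3 := by
  obtain rfl | h3 := eq_or_ne d 3
  · rw [Scholz.clTor_Qneg_three, Scholz.clTor_Qpos3_three]
    norm_num
  have hd0 : d ≠ 0 := by omega
  have hnegsq := Scholz.not_isSquare_neg_natCast hd0
  have hpossq := Scholz.not_isSquare_three_mul hsq h3
  have hx := Scholz.I_mul_sqrt_sq d
  have hy := Scholz.sqrt_three_mul_sq d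
  have hs : (Complex.I * (√(3 : ℕ) : ℝ)) ^ 2 = -3 := by simpa using Scholz.I_mul_sqrt_sq 3
  have hxy := Scholz.I_mul_sqrt_mul_sqrt_three_mul d
  have hneg : Module.finrank ℚ (Qneg d) = 2 := Scholz.finrank_adjoin_sqrt_eq_two hnegsq hx
  have hpos : Module.finrank ℚ (Qpos3 d) = 2 := Scholz.finrank_adjoin_sqrt_eq_two hpossq hy
  have hne := Scholz.Qneg_ne_Qpos3 hd0
  have hxmem := mem_adjoin_simple_self ℚ (Complex.I * (√d : ℝ))
  have hymem := mem_adjoin_simple_self ℚ ((√(3 * d) : ℝ) : ℂ)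
  exact ⟨Scholz.clTor_le_three_mul_clTor_of_mul_eq hpos hneg hne.symm hnegsq hymem hxmem hx hs
      (Nat.cast_ne_zero.2 hd0) ((mul_comm _ _).trans hxy),
    Scholz.clTor_le_three_mul_clTor_of_mul_eq hneg hpos hne hpossq hxmem hymem hy hs
      (Nat.cast_ne_zero.2 hd0) hxy⟩
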